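/- The formal character of the Schur supermodule Ŝ_λ(k^{m|n}) equals the hook Schur function hs_λ(x_1,...,x_m; y_1,...,y_n) = Σ_{μ⊂λ} s_μ(x_1,...,x_m) s_{λ'/μ'}(y_1,...,y_n). -/

import Mathlib

open Finset
open scoped Classical

namespace SuperSchur

/-- Words of length `d` in an alphabet with `NN` letters. -/
abbrev Word (d NN : ℕ) := Fin d → Fin NN

/-- The `d`-th tensor power of the free superspace on `NN` letters, as the free
module on words. -/
abbrev Tens (k : Type) [Field k] (d NN : ℕ) := Word d NN →₀ k

variable (k : Type) [Field k]

/-- `sgn(ε, σ)` from the paper. -/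
noncomputable def sgnF {d : ℕ} (ε : Fin d → ZMod 2) (σ : Equiv.Perm (Fin d)) : k :=
  ∏ p ∈ univ.filter (fun p : Fin d × Fin d => p.1 < p.2 ∧ σ⁻¹ p.2 < σ⁻¹ p.1),
    (-1 : k) ^ ((ε p.1).val * (ε p.2).val)

/-- The signed (right) place-permutation action of `σ` on the tensor power, where the
letter `j` has parity `pr j`. -/
noncomputable def act {d NN : ℕ} (pr : Fin NN → ZMod 2) (σ : Equiv.Perm (Fin d)) :
    Tens k d NN →ₗ[k] Tens k d NN :=
  Finsupp.lsum k fun w =>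
    LinearMap.toSpanSingleton k _
      (sgnF k (fun s => pr (w s)) σ • Finsupp.single (w ∘ σ) (1 : k))

/-- The cells of the skew diagram `λ/μ` (at most `q` rows). -/
def cellsF (q : ℕ) (lam mu : ℕ → ℕ) : Finset (ℕ × ℕ) :=
  ((range q) ×ˢ range ((range q).sup lam)).filter fun p => mu p.1 ≤ p.2 ∧ p.2 < lam p.1

/-- The number of cells `d = |λ/μ|`. -/
def dOf (q : ℕ) (lam mu : ℕ → ℕ) : ℕ := (cellsF q lam mu).card

/-- Cells, ordered by the row-reading (lexicographic) order. -/
def cellsRL (q : ℕ) (lam mu : ℕ → ℕ) : Finset (ℕ ×ₗ ℕ) :=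
  (cellsF q lam mu).map toLex.toEmbedding

/-- Cells, ordered by the column-reading order. -/
def cellsCL (q : ℕ) (lam mu : ℕ → ℕ) : Finset (ℕ ×ₗ ℕ) :=
  (cellsF q lam mu).map ((Equiv.prodComm ℕ ℕ).trans toLex).toEmbedding

lemma cardRL (q : ℕ) (lam mu : ℕ → ℕ) : (cellsRL q lam mu).card = dOf q lam mu :=
  Finset.card_map _

lemma cardCL (q : ℕ) (lam mu : ℕ → ℕ) : (cellsCL q lam mu).card = dOf q lam mu :=
  Finset.card_map _

/-- The row-reading enumeration of the cells. -/
noncomputable def oR (q : ℕ) (lam mu : ℕ → ℕ) :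
    Fin (dOf q lam mu) ≃o {x // x ∈ cellsRL q lam mu} :=
  (cellsRL q lam mu).orderIsoOfFin (cardRL q lam mu)

/-- The column-reading enumeration of the cells. -/
noncomputable def oC (q : ℕ) (lam mu : ℕ → ℕ) :
    Fin (dOf q lam mu) ≃o {x // x ∈ cellsCL q lam mu} :=
  (cellsCL q lam mu).orderIsoOfFin (cardCL q lam mu)

/-- The cell `(i, j)` at row-reading position `r`. -/
noncomputable def cellOf (q : ℕ) (lam mu : ℕ → ℕ) (r : Fin (dOf q lam mu)) : ℕ × ℕ :=
  ofLex (oR q lam mu r).val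

/-- The cell `(i, j)` at column-reading position `s`. -/
noncomputable def cellC (q : ℕ) (lam mu : ℕ → ℕ) (s : Fin (dOf q lam mu)) : ℕ × ℕ :=
  (ofLex (oC q lam mu s).val).swap

lemma cellOf_mem (q : ℕ) (lam mu : ℕ → ℕ) (r : Fin (dOf q lam mu)) :
    cellOf q lam mu r ∈ cellsF q lam mu := by
  have h := Finset.mem_map_equiv.mp ((oR q lam mu r).2 : _ ∈ cellsRL q lam mu)
  simpa [cellOf] using h

lemma cellC_mem (q : ℕ) (lam mu : ℕ → ℕ) (s : Fin (dOf q lam mu)) :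
    cellC q lam mu s ∈ cellsF q lam mu := by
  have h := Finset.mem_map_equiv.mp ((oC q lam mu s).2 : _ ∈ cellsCL q lam mu)
  simpa [cellC, Equiv.prodComm] using h

/-- The permutation `σ_{λ'/μ'}` translating row-reading positions into column-reading
positions. -/
noncomputable def sigmaRC (q : ℕ) (lam mu : ℕ → ℕ) : Equiv.Perm (Fin (dOf q lam mu)) := by
  refine Equiv.ofBijective
    (fun s => (oR q lam mu).symm
      ⟨toLex (cellC q lam mu s), ?_⟩) ?_
  · simp only [cellsRL, Finset.mem_map, Equiv.toEmbedding_apply]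
    exact ⟨cellC q lam mu s, cellC_mem q lam mu s, rfl⟩
  · rw [Fintype.bijective_iff_injective_and_card]
    refine ⟨?_, rfl⟩
    intro a b h
    have h' := congrArg (oR q lam mu) h
    rw [OrderIso.apply_symm_apply, OrderIso.apply_symm_apply] at h'
    have hx : toLex (cellC q lam mu a) = toLex (cellC q lam mu b) := congrArg Subtype.val h'
    have hcc : cellC q lam mu a = cellC q lam mu b := toLex.injective hx
    have hswap : ofLex (oC q lam mu a).val = ofLex (oC q lam mu b).val := by
      have := congrArg Prod.swap hcc
      simpa [cellC] using this
    have : (oC q lam mu a).val = (oC q lam mu b).val := ofLex.injective hswap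
    exact (oC q lam mu).injective (Subtype.ext this)

/-- Row of the cell at row-reading position `r`. -/
noncomputable def rowOf (q : ℕ) (lam mu : ℕ → ℕ) (r : Fin (dOf q lam mu)) : ℕ :=
  (cellOf q lam mu r).1

/-- Column of the cell at row-reading position `r`. -/
noncomputable def colOf (q : ℕ) (lam mu : ℕ → ℕ) (r : Fin (dOf q lam mu)) : ℕ :=
  (cellOf q lam mu r).2

/-- `σ` permutes positions within the rows. -/
noncomputable def RowPerm (q : ℕ) (lam mu : ℕ → ℕ) (σ : Equiv.Perm (Fin (dOf q lam mu))) :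
    Prop := ∀ r, rowOf q lam mu (σ r) = rowOf q lam mu r

/-- `τ` permutes column-reading positions within the columns. -/
noncomputable def ColPermC (q : ℕ) (lam mu : ℕ → ℕ) (τ : Equiv.Perm (Fin (dOf q lam mu))) :
    Prop := ∀ s, (cellC q lam mu (τ s)).2 = (cellC q lam mu s).2

/-- `Γ_Π^{λ/μ}(M)`, realized as the row-wise invariants of the tensor power under the
signed action for the reversed parity `par + 1`. -/
noncomputable def GammaPi (q : ℕ) (lam mu : ℕ → ℕ) {NN : ℕ} (par : Fin NN → ZMod 2) :
    Submodule k (Tens k (dOf q lam mu) NN) :=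
  ⨅ (σ : Equiv.Perm (Fin (dOf q lam mu))) (_ : RowPerm q lam mu σ),
    LinearMap.eqLocus (act k (fun j => par j + 1) σ) LinearMap.id

/-- The relations defining the column-wise symmetric power quotient `S^{λ'/μ'}(M)`. -/
noncomputable def Urel (q : ℕ) (lam mu : ℕ → ℕ) {NN : ℕ} (par : Fin NN → ZMod 2) :
    Submodule k (Tens k (dOf q lam mu) NN) :=
  ⨆ (τ : Equiv.Perm (Fin (dOf q lam mu))) (_ : ColPermC q lam mu τ),
    LinearMap.range (act k par τ - LinearMap.id)

/-- The Schur map `θ̂_{λ'/μ'}(M) : M^{⊗ d} → S^{λ'/μ'}(M)` (to be restricted to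
`Γ_Π^{λ/μ}(M)`). -/
noncomputable def theta (q : ℕ) (lam mu : ℕ → ℕ) {NN : ℕ} (par : Fin NN → ZMod 2) :
    Tens k (dOf q lam mu) NN →ₗ[k]
      (Tens k (dOf q lam mu) NN ⧸ Urel k q lam mu par) :=
  (Urel k q lam mu par).mkQ ∘ₗ act k par (sigmaRC q lam mu)

/-- The Schur supermodule `Ŝ_{λ'/μ'}(M)`, the image of `Γ_Π^{λ/μ}(M)` under the Schur
map. -/
noncomputable def SHat (q : ℕ) (lam mu : ℕ → ℕ) {NN : ℕ} (par : Fin NN → ZMod 2) :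
    Submodule k (Tens k (dOf q lam mu) NN ⧸ Urel k q lam mu par) :=
  Submodule.map (theta k q lam mu par) (GammaPi k q lam mu par)

/-- Two words are row equivalent if one is obtained from the other by permuting
entries within rows. -/
noncomputable def rowEquivW (q : ℕ) (lam mu : ℕ → ℕ) {NN : ℕ}
    (w w' : Word (dOf q lam mu) NN) : Prop :=
  ∃ σ, RowPerm q lam mu σ ∧ w' = w ∘ σ

/-- The sign attached to a row rearrangement of a word, for the parity `pr`. -/
noncomputable def invSign (q : ℕ) (lam mu : ℕ → ℕ) {NN : ℕ} (pr : Fin NN → ZMod 2)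
    (w : Word (dOf q lam mu) NN) : k :=
  ∏ p ∈ univ.filter
      (fun p : Fin (dOf q lam mu) × Fin (dOf q lam mu) =>
        p.1 < p.2 ∧ rowOf q lam mu p.1 = rowOf q lam mu p.2 ∧ w p.2 < w p.1),
    (-1 : k) ^ ((pr (w p.1)).val * (pr (w p.2)).val)

/-- The divided-power basis element `Z_Π^{(t)}` of `Γ_Π^{λ/μ}(M)` attached to a (row
costandard) tableau with reading word `w`. -/
noncomputable def ZPi (q : ℕ) (lam mu : ℕ → ℕ) {NN : ℕ} (par : Fin NN → ZMod 2)
    (w : Word (dOf q lam mu) NN) : Tens k (dOf q lam mu) NN :=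
  ∑ w' : Word (dOf q lam mu) NN,
    (if rowEquivW q lam mu w w' then invSign k q lam mu (fun j => par j + 1) w' else 0) •
      Finsupp.single w' (1 : k)

/-- Positions `r, r'` are horizontally adjacent cells. -/
noncomputable def rowAdj (q : ℕ) (lam mu : ℕ → ℕ) (r r' : Fin (dOf q lam mu)) : Prop :=
  rowOf q lam mu r = rowOf q lam mu r' ∧ colOf q lam mu r' = colOf q lam mu r + 1

/-- Positions `r, r'` are vertically adjacent cells. -/
noncomputable def colAdj (q : ℕ) (lam mu : ℕ → ℕ) (r r' : Fin (dOf q lam mu)) : Prop :=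
  colOf q lam mu r = colOf q lam mu r' ∧ rowOf q lam mu r' = rowOf q lam mu r + 1

/-- Row costandard: rows nondecreasing, repeated entries only among odd letters. -/
noncomputable def RowCostd (q : ℕ) (lam mu : ℕ → ℕ) {NN : ℕ} (par : Fin NN → ZMod 2)
    (w : Word (dOf q lam mu) NN) : Prop :=
  ∀ r r', rowAdj q lam mu r r' → w r ≤ w r' ∧ (w r = w r' → par (w r) = 1)

/-- Costandard: additionally columns nondecreasing with repeats only among even
letters. -/
noncomputable def Costd (q : ℕ) (lam mu : ℕ → ℕ) {NN : ℕ} (par : Fin NN → ZMod 2)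
    (w : Word (dOf q lam mu) NN) : Prop :=
  RowCostd q lam mu par w ∧
    ∀ r r', colAdj q lam mu r r' → w r ≤ w r' ∧ (w r = w r' → par (w r) = 0)

/-- `t_{p,a}`: the number of entries `≤ a` among the first `p` rows. -/
noncomputable def countPA (q : ℕ) (lam mu : ℕ → ℕ) {NN : ℕ}
    (w : Word (dOf q lam mu) NN) (p a : ℕ) : ℕ :=
  (univ.filter fun r => rowOf q lam mu r < p ∧ ((w r : ℕ) ≤ a)).card

/-- The order `w₁ ⊴ w₂` on tableaux. -/
noncomputable def Tle (q : ℕ) (lam mu : ℕ → ℕ) {NN : ℕ}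
    (w₁ w₂ : Word (dOf q lam mu) NN) : Prop :=
  ∀ p a, countPA q lam mu w₂ p a ≤ countPA q lam mu w₁ p a

/-- The strict order `w₁ ◁ w₂`. -/
noncomputable def Tlt (q : ℕ) (lam mu : ℕ → ℕ) {NN : ℕ}
    (w₁ w₂ : Word (dOf q lam mu) NN) : Prop :=
  Tle q lam mu w₁ w₂ ∧ ∃ p a, countPA q lam mu w₂ p a < countPA q lam mu w₁ p a

/-- Number of cells in the rows before row `i`; the row-reading positions of row `i`
are `[rowStart i, rowStart (i+1))`. -/
def rowStart (q : ℕ) (lam mu : ℕ → ℕ) (i : ℕ) : ℕ :=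
  ((cellsF q lam mu).filter fun c => c.1 < i).card

def Bmem (lo hi x : ℕ) : Prop := lo ≤ x ∧ x < hi

/-- Position lies in row `i` or row `i+1`. -/
noncomputable def inBlock12 (q : ℕ) (lam mu : ℕ → ℕ) (i : ℕ)
    (r : Fin (dOf q lam mu)) : Prop :=
  rowOf q lam mu r = i ∨ rowOf q lam mu r = i + 1

/-- The coset representatives ("shuffles") implementing the multiplication
`Γ^u ⊗ Γ^{p₁-u} → Γ^{p₁}` and `Γ^{p₂-v} ⊗ Γ^v → Γ^{p₂}` on the rows `i, i+1`. -/
noncomputable def ShuffleSet (q : ℕ) (lam mu : ℕ → ℕ) (i u v : ℕ) :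
    Finset (Equiv.Perm (Fin (dOf q lam mu))) :=
  univ.filter fun σ =>
    (∀ r, ¬ inBlock12 q lam mu i r → σ r = r) ∧
    (∀ r, rowOf q lam mu r = i → rowOf q lam mu (σ r) = i) ∧
    (∀ r, rowOf q lam mu r = i + 1 → rowOf q lam mu (σ r) = i + 1) ∧
    (∀ r r' : Fin (dOf q lam mu), (r : ℕ) < r' →
      Bmem (rowStart q lam mu i) (rowStart q lam mu i + u) r →
      Bmem (rowStart q lam mu i) (rowStart q lam mu i + u) r' →
      (σ r : ℕ) < σ r') ∧
    (∀ r r' : Fin (dOf q lam mu), (r : ℕ) < r' →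
      Bmem (rowStart q lam mu i + u) (rowStart q lam mu (i + 1)) r →
      Bmem (rowStart q lam mu i + u) (rowStart q lam mu (i + 1)) r' →
      (σ r : ℕ) < σ r') ∧
    (∀ r r' : Fin (dOf q lam mu), (r : ℕ) < r' →
      Bmem (rowStart q lam mu (i + 1)) (rowStart q lam mu (i + 2) - v) r →
      Bmem (rowStart q lam mu (i + 1)) (rowStart q lam mu (i + 2) - v) r' →
      (σ r : ℕ) < σ r') ∧
    (∀ r r' : Fin (dOf q lam mu), (r : ℕ) < r' →
      Bmem (rowStart q lam mu (i + 2) - v) (rowStart q lam mu (i + 2)) r →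
      Bmem (rowStart q lam mu (i + 2) - v) (rowStart q lam mu (i + 2)) r' →
      (σ r : ℕ) < σ r')

/-- The component `◇_i(λ/μ, u, v; M)` of the boundary map, as an endomorphism of the
ambient tensor power. -/
noncomputable def DiamondMap (q : ℕ) (lam mu : ℕ → ℕ) {NN : ℕ} (par : Fin NN → ZMod 2)
    (i u v : ℕ) : Tens k (dOf q lam mu) NN →ₗ[k] Tens k (dOf q lam mu) NN :=
  ∑ σ ∈ ShuffleSet q lam mu i u v, act k (fun j => par j + 1) σ

/-- The parabolic subgroup fixing the block decomposition
`(rows ≠ i,i+1) ; [s_i, s_i+u) ; [s_i+u, s_{i+2}-v) ; [s_{i+2}-v, s_{i+2})`. -/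
noncomputable def QPermD (q : ℕ) (lam mu : ℕ → ℕ) (i u v : ℕ)
    (σ : Equiv.Perm (Fin (dOf q lam mu))) : Prop :=
  (∀ r, ¬ inBlock12 q lam mu i r → rowOf q lam mu (σ r) = rowOf q lam mu r) ∧
  (∀ r : Fin (dOf q lam mu), Bmem (rowStart q lam mu i) (rowStart q lam mu i + u) r →
    Bmem (rowStart q lam mu i) (rowStart q lam mu i + u) (σ r)) ∧
  (∀ r : Fin (dOf q lam mu),
    Bmem (rowStart q lam mu i + u) (rowStart q lam mu (i + 2) - v) r →
    Bmem (rowStart q lam mu i + u) (rowStart q lam mu (i + 2) - v) (σ r)) ∧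
  (∀ r : Fin (dOf q lam mu),
    Bmem (rowStart q lam mu (i + 2) - v) (rowStart q lam mu (i + 2)) r →
    Bmem (rowStart q lam mu (i + 2) - v) (rowStart q lam mu (i + 2)) (σ r))

/-- The domain `Γ_Π^{…} ⊗ (Γ_Π^u ⊗ Γ_Π^{p₁-u+p₂-v} ⊗ Γ_Π^v) ⊗ Γ_Π^{…}` of
`◇_i(λ/μ,u,v)`, as invariants. -/
noncomputable def DomD (q : ℕ) (lam mu : ℕ → ℕ) {NN : ℕ} (par : Fin NN → ZMod 2)
    (i u v : ℕ) : Submodule k (Tens k (dOf q lam mu) NN) :=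
  ⨅ (σ : Equiv.Perm (Fin (dOf q lam mu))) (_ : QPermD q lam mu i u v σ),
    LinearMap.eqLocus (act k (fun j => par j + 1) σ) LinearMap.id

/-- The image of the boundary map `◇_{λ/μ}(M)`. -/
noncomputable def ImDiamond (q : ℕ) (lam mu : ℕ → ℕ) {NN : ℕ} (par : Fin NN → ZMod 2) :
    Submodule k (Tens k (dOf q lam mu) NN) :=
  ⨆ (i : ℕ) (u : ℕ) (v : ℕ) (_ : u + v < lam (i + 1) - mu i),
    Submodule.map (DiamondMap k q lam mu par i u v) (DomD k q lam mu par i u v)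

attribute [irreducible] GammaPi Urel theta SHat ZPi ImDiamond DomD DiamondMap act sgnF invSign

end SuperSchur

namespace SuperSchur

/-- The weight of a word: the multiplicity of each letter. -/
noncomputable def wtW {d NN : ℕ} (w : Word d NN) : Fin NN → ℕ :=
  fun a => (univ.filter fun r => w r = a).card

/-- The span of the basis words of weight `μ` inside the tensor power. -/
noncomputable def WtSpan (k : Type) [Field k] (d NN : ℕ) (μf : Fin NN → ℕ) :
    Submodule k (Tens k d NN) :=
  Submodule.span k {x | ∃ w : Word d NN, wtW w = μf ∧ x = Finsupp.single w (1 : k)}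

/-- The weight space `(Ŝ)_μ` of the Schur supermodule. -/
noncomputable def SHatWt (k : Type) [Field k] (q : ℕ) (lam mu : ℕ → ℕ) {NN : ℕ}
    (par : Fin NN → ZMod 2) (μf : Fin NN → ℕ) :
    Submodule k (Tens k (dOf q lam mu) NN ⧸ Urel k q lam mu par) :=
  SHat k q lam mu par ⊓
    Submodule.map (Urel k q lam mu par).mkQ (WtSpan k (dOf q lam mu) NN μf)

/-- The formal character `ch(Ŝ) = Σ_μ dim (Ŝ)_μ · z^μ`. -/
noncomputable def chSHat (k : Type) [Field k] (q : ℕ) (lam mu : ℕ → ℕ) {NN : ℕ}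
    (par : Fin NN → ZMod 2) : MvPolynomial (Fin NN) ℤ :=
  ∑ μf ∈ Finset.image (fun w : Word (dOf q lam mu) NN => wtW w) univ,
    MvPolynomial.C (Module.finrank k ↥(SHatWt k q lam mu par μf) : ℤ) *
      MvPolynomial.monomial (Finsupp.equivFunOnFinite.symm μf) 1

/-- The conjugate partition `λ'`. -/
def conjOf (q : ℕ) (lam : ℕ → ℕ) : ℕ → ℕ :=
  fun j => ((range q).filter fun i => j < lam i).card

/-- Semistandardness of a tableau on a set of cells: rows weakly increasing,
columns strictly increasing. -/
def SSYTpred {m : ℕ} (cells : Finset (ℕ × ℕ)) (T : ↥cells → Fin m) : Prop :=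
  (∀ (c c' : ↥cells), c.1.1 = c'.1.1 → c'.1.2 = c.1.2 + 1 → T c ≤ T c') ∧
  (∀ (c c' : ↥cells), c.1.2 = c'.1.2 → c'.1.1 = c.1.1 + 1 → T c < T c')

/-- The generating polynomial `Σ_T Π_c x_{e(T(c))}` of semistandard tableaux on a set
of cells, in the variables selected by `e`; for a (skew) shape this is the (skew)
Schur polynomial. -/
noncomputable def tabPoly {m NN : ℕ} (cells : Finset (ℕ × ℕ)) (e : Fin m → Fin NN) :
    MvPolynomial (Fin NN) ℤ :=
  ∑ T ∈ (univ : Finset (↥cells → Fin m)).filter (SSYTpred cells),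
    ∏ c : ↥cells, MvPolynomial.X (e (T c))

/-- The partition `μ ⊆ λ` determined by `f`. -/
def muOf (q : ℕ) (lam : ℕ → ℕ) (f : (i : Fin q) → Fin (lam i + 1)) : ℕ → ℕ :=
  fun i => if h : i < q then (f ⟨i, h⟩ : ℕ) else 0

/-- The cells of the conjugate skew shape `λ'/μ'` (the transpose of `λ/μ`). -/
noncomputable def conjSkewCells (q : ℕ) (lam mu : ℕ → ℕ) : Finset (ℕ × ℕ) :=
  (cellsF q lam (fun _ => 0) \ cellsF q mu (fun _ => 0)).image Prod.swap

/-- The hook Schur polynomial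
`hs_λ(x₁,…,x_m; y₁,…,y_n) = Σ_{μ ⊆ λ} s_μ(x) · s_{λ'/μ'}(y)`, where the (skew) Schur
polynomials are given by their semistandard-tableaux expansions, the `x`-variables
being the first `m` and the `y`-variables the last `n` of the `m + n` variables. -/
noncomputable def hookSchur (q m n : ℕ) (lam : ℕ → ℕ) : MvPolynomial (Fin (m + n)) ℤ :=
  ∑ f ∈ (univ : Finset ((i : Fin q) → Fin (lam i + 1))).filter
      (fun f => ∀ i j : Fin q, i ≤ j → (f j : ℕ) ≤ (f i : ℕ)),
    tabPoly (cellsF q (muOf q lam f) (fun _ => 0)) (Fin.castAdd n) *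
      tabPoly (conjSkewCells q lam (muOf q lam f)) (Fin.natAdd m)

/-
A row permutation acts on `M^{⊗d}` with the signs of the parity-reversed letters, that is, with the
signs of the letters twisted by the sign of the permutation.  Twisting by column signs therefore
turns the Schur map into the map from sign-twisted row invariants to column coinvariants.

The images of the orbit sums of costandard tableaux are a basis of `Ŝ_λ`.  They are independent
because pairing them with the column functionals of costandard tableaux gives a matrix that is
unitriangular for the dominance order on tableaux.  They span because, across a failure of column
standardness, the sum over a Garnir belt is killed in the column coinvariants and, modulo
tableaux with more small entries in their upper rows, is the orbit sum of the offending tableau.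
Hence the character counts costandard tableaux of the conjugate shape by weight.

The even letters of the transpose of such a tableau fill the diagram of a partition `μ ⊆ λ`
semistandardly, and the transpose of the remaining skew part is semistandard of shape `λ'/μ'`;
summing over `μ` gives the hook Schur polynomial.
-/

section Signs

variable {d : ℕ}

lemma prod_lt_comp_perm {R : Type*} [CommMonoid R] (g : Fin d → Fin d → R)
    (hg : ∀ a b, g a b = g b a) (σ : Equiv.Perm (Fin d)) :
    ∏ p : Fin d × Fin d with p.1 < p.2, g (σ p.1) (σ p.2) =
      ∏ p : Fin d × Fin d with p.1 < p.2, g p.1 p.2 := by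
  refine Finset.prod_bij' (fun p _ => (min (σ p.1) (σ p.2), max (σ p.1) (σ p.2)))
    (fun p _ => (min (σ⁻¹ p.1) (σ⁻¹ p.2), max (σ⁻¹ p.1) (σ⁻¹ p.2))) ?_ ?_ ?_ ?_ ?_
  · exact fun p h => mem_filter.2
      ⟨mem_univ _, min_lt_max.2 (σ.injective.ne (mem_filter.1 h).2.ne)⟩
  · exact fun p h => mem_filter.2
      ⟨mem_univ _, min_lt_max.2 (σ⁻¹.injective.ne (mem_filter.1 h).2.ne)⟩
  · rintro ⟨a, b⟩ h
    have hab : a < b := (mem_filter.1 h).2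
    rcases le_total (σ a) (σ b) with h' | h' <;> simp [h', hab.le]
  · rintro ⟨a, b⟩ h
    have hab : a < b := (mem_filter.1 h).2
    rcases le_total (σ⁻¹ a) (σ⁻¹ b) with h' | h' <;> simp_all [hab.le]
  · rintro ⟨a, b⟩ -
    rcases le_total (σ a) (σ b) with h' | h' <;> simp [h', hg]

lemma prod_pow_val {R : Type*} [CommMonoid R] (s : Fin d → R) :
    ∏ p, s p ^ (p : ℕ) = ∏ p : Fin d × Fin d with p.1 < p.2, s p.2 := by
  rw [prod_filter, ← univ_product_univ, prod_product_right]
  refine prod_congr rfl fun b _ => ?_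
  rw [← prod_filter (fun a => a < b) fun _ => s b, prod_const,
    show (univ.filter fun a => a < b) = Iio b by ext; simp, Fin.card_Iio]

lemma prod_pow_add_inv_val {R : Type*} [CommMonoid R] (s : Fin d → R) (hs : ∀ p, s p * s p = 1)
    (σ : Equiv.Perm (Fin d)) :
    ∏ p, s p ^ ((p : ℕ) + (σ⁻¹ p : Fin d)) =
      ∏ p : Fin d × Fin d with p.1 < p.2 ∧ σ⁻¹ p.2 < σ⁻¹ p.1, s p.1 * s p.2 := by
  have inv_apply (p) : σ⁻¹ (σ p) = p := σ.symm_apply_apply p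
  let later (a b : Fin d) : R := if σ⁻¹ a ≤ σ⁻¹ b then s b else s a
  have later_symm (a b) : later a b = later b a := by
    rcases lt_trichotomy (σ⁻¹ a) (σ⁻¹ b) with h | h | h
    · simp only [later, h.le, h.not_ge, if_true, if_false]
    · obtain rfl := σ⁻¹.injective h
      rfl
    · simp only [later, h.le, h.not_ge, if_true, if_false]
  have prod_pow_inv : ∏ p, s p ^ (σ⁻¹ p : ℕ) = ∏ p : Fin d × Fin d with p.1 < p.2,
      later p.1 p.2 := by
    rw [← prod_lt_comp_perm later later_symm σ, ← Equiv.prod_comp σ]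
    simp only [inv_apply, later]
    rw [prod_pow_val fun p => s (σ p)]
    exact prod_congr rfl fun p hp => (if_pos (mem_filter.1 hp).2.le).symm
  simp only [pow_add]
  rw [prod_mul_distrib, prod_pow_val, prod_pow_inv, ← prod_mul_distrib, ← filter_filter,
    prod_filter (fun p : Fin d × Fin d => σ⁻¹ p.2 < σ⁻¹ p.1)]
  refine prod_congr rfl fun p _ => ?_
  rcases le_or_gt (σ⁻¹ p.1) (σ⁻¹ p.2) with h | h
  · rw [if_neg h.not_gt, show later p.1 p.2 = s p.2 from if_pos h, hs]
  · rw [if_pos h, show later p.1 p.2 = s p.1 from if_neg h.not_ge, mul_comm]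

variable {k : Type} [Field k]

lemma neg_one_pow_mul_self (j : ℕ) : (-1 : k) ^ j * (-1) ^ j = 1 := by
  rw [← mul_pow]; simp

lemma sgnF_mul (ε : Fin d → ZMod 2) (σ τ : Equiv.Perm (Fin d)) :
    sgnF k ε (σ * τ) = sgnF k ε σ * sgnF k (ε ∘ σ) τ := by
  have sgnF_eq (ε : Fin d → ZMod 2) (σ : Equiv.Perm (Fin d)) :
      sgnF k ε σ = ∏ p : Fin d × Fin d with p.1 < p.2,
        if σ⁻¹ p.2 < σ⁻¹ p.1 then (-1 : k) ^ ((ε p.1).val * (ε p.2).val) else 1 := by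
    rw [← prod_filter, filter_filter, sgnF]
  let newInv (a b : Fin d) : Prop := σ⁻¹ a < σ⁻¹ b ∧ τ⁻¹ (σ⁻¹ b) < τ⁻¹ (σ⁻¹ a)
  let g (a b : Fin d) : k :=
    if newInv a b ∨ newInv b a then (-1 : k) ^ ((ε a).val * (ε b).val) else 1
  have sgnF_comp : sgnF k (ε ∘ σ) τ = ∏ p : Fin d × Fin d with p.1 < p.2, g p.1 p.2 := by
    rw [← prod_lt_comp_perm g (fun a b => by simp only [g, mul_comm (ε a).val, or_comm]) σ,
      sgnF_eq]
    refine prod_congr rfl fun p hp => ?_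
    have hp' := (mem_filter.1 hp).2
    simp [g, newInv, hp', hp'.not_gt]
  rw [sgnF_comp, sgnF_eq, sgnF_eq, ← prod_mul_distrib]
  refine prod_congr rfl fun p hp => ?_
  have hσ : σ⁻¹ p.1 ≠ σ⁻¹ p.2 := σ⁻¹.injective.ne (mem_filter.1 hp).2.ne
  have hτ : τ⁻¹ (σ⁻¹ p.1) ≠ τ⁻¹ (σ⁻¹ p.2) := τ⁻¹.injective.ne hσ
  simp only [g, newInv, mul_inv_rev, Equiv.Perm.mul_apply]
  rcases hσ.lt_or_gt with hσ | hσ <;> rcases hτ.lt_or_gt with hτ | hτ <;>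
    simp only [hσ, hσ.not_gt, hτ, hτ.not_gt, neg_one_pow_mul_self, if_true, if_false, and_true,
      and_false, or_true, or_false, mul_one, one_mul]

lemma sgnF_mul_self (ε : Fin d → ZMod 2) (σ : Equiv.Perm (Fin d)) :
    sgnF k ε σ * sgnF k ε σ = 1 := by
  rw [sgnF, ← prod_mul_distrib]
  exact prod_eq_one fun p _ => neg_one_pow_mul_self _

lemma sgnF_eq_one_of_odd_fixed {ε : Fin d → ZMod 2} {σ : Equiv.Perm (Fin d)}
    (h : ∀ p, ε p ≠ 0 → σ p = p) : sgnF k ε σ = 1 := by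
  rw [sgnF]
  refine prod_eq_one fun ⟨a, b⟩ hp => ?_
  obtain ⟨-, hab, hσ⟩ := mem_filter.1 hp
  by_cases ha : ε a = 0
  · simp [ha]
  by_cases hb : ε b = 0
  · simp [hb]
  rw [Equiv.Perm.inv_eq_iff_eq.2 (h a ha).symm, Equiv.Perm.inv_eq_iff_eq.2 (h b hb).symm] at hσ
  exact absurd hab hσ.not_gt

lemma sgnF_one (ε : Fin d → ZMod 2) : sgnF k ε 1 = 1 :=
  sgnF_eq_one_of_odd_fixed fun _ _ => rfl

lemma prod_inversions_neg_one (σ : Equiv.Perm (Fin d)) :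
    ∏ _p : Fin d × Fin d with _p.1 < _p.2 ∧ σ⁻¹ _p.2 < σ⁻¹ _p.1, (-1 : k) =
      ((Equiv.Perm.sign σ : ℤ) : k) := by
  rw [← Equiv.Perm.sign_inv, Equiv.Perm.sign_eq_prod_prod_Ioi, ← filter_filter,
    prod_filter, prod_filter, ← univ_product_univ, prod_product]
  push_cast
  refine prod_congr rfl fun a _ => ?_
  rw [← prod_filter, show (univ.filter fun b => a < b) = Ioi a by ext; simp]
  refine prod_congr rfl fun b hb => ?_
  have hσ : σ⁻¹ a ≠ σ⁻¹ b := σ⁻¹.injective.ne (mem_Ioi.1 hb).ne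
  rcases hσ.lt_or_gt with hσ | hσ <;>
    simp only [hσ, hσ.not_gt, if_true, if_false, Units.val_one, Units.val_neg, Int.cast_one,
      Int.cast_neg]

lemma sgnF_add_one (ε : Fin d → ZMod 2) (σ : Equiv.Perm (Fin d)) :
    sgnF k (fun p => ε p + 1) σ = ((Equiv.Perm.sign σ : ℤ) : k) * sgnF k ε σ *
      ∏ p, (-1 : k) ^ ((ε p).val * ((p : ℕ) + (σ⁻¹ p : Fin d))) := by
  have neg_one_pow_shift (a b : ZMod 2) : (-1 : k) ^ ((a + 1).val * (b + 1).val) =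
      (-1) * (-1 : k) ^ (a.val * b.val) * ((-1) ^ a.val * (-1) ^ b.val) := by
    have zero_or_one : ∀ c : ZMod 2, c = 0 ∨ c = 1 := by decide
    have one_add_one : (1 + 1 : ZMod 2) = 0 := by decide
    rcases zero_or_one a with rfl | rfl <;> rcases zero_or_one b with rfl | rfl <;>
      simp [one_add_one, ZMod.val_one]
  simp only [pow_mul]
  rw [prod_pow_add_inv_val _ (fun p => neg_one_pow_mul_self _), ← prod_inversions_neg_one,
    sgnF, sgnF, ← prod_mul_distrib, ← prod_mul_distrib]
  exact prod_congr rfl fun p _ => neg_one_pow_shift _ _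

lemma sgnF_add_one_of_invariant {ε : Fin d → ZMod 2} {σ : Equiv.Perm (Fin d)}
    (h : ∀ p, ε (σ p) = ε p) :
    sgnF k (fun p => ε p + 1) σ = ((Equiv.Perm.sign σ : ℤ) : k) * sgnF k ε σ := by
  have prod_eq_one : ∏ p, (-1 : k) ^ ((ε p).val * ((p : ℕ) + (σ⁻¹ p : Fin d))) = 1 := by
    simp only [mul_add, pow_add]
    rw [prod_mul_distrib, ← Equiv.prod_comp σ fun p => (-1 : k) ^ ((ε p).val * (σ⁻¹ p : Fin d)),
      ← prod_mul_distrib]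
    refine prod_eq_one fun p _ => ?_
    rw [h, show σ⁻¹ (σ p) = p from σ.symm_apply_apply p, neg_one_pow_mul_self]
  rw [sgnF_add_one, prod_eq_one, mul_one]

end Signs

section Action

variable {k : Type} [Field k] {d NN : ℕ} (pr : Fin NN → ZMod 2)

lemma act_single (σ : Equiv.Perm (Fin d)) (w : Word d NN) (c : k) :
    act k pr σ (Finsupp.single w c) = Finsupp.single (w ∘ σ) (c * sgnF k (pr ∘ w) σ) := by
  simp [act, Function.comp_def]

lemma act_one : act k pr (1 : Equiv.Perm (Fin d)) = LinearMap.id := by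
  refine Finsupp.lhom_ext fun w c => ?_
  rw [act_single, sgnF_one, mul_one]
  rfl

lemma act_mul (σ τ : Equiv.Perm (Fin d)) :
    act k pr (σ * τ) = act k pr τ ∘ₗ act k pr σ := by
  refine Finsupp.lhom_ext fun w c => ?_
  rw [LinearMap.comp_apply, act_single, act_single, act_single, sgnF_mul, mul_assoc]
  rfl

lemma act_apply_comp (σ : Equiv.Perm (Fin d)) (v : Tens k d NN) (w : Word d NN) :
    act k pr σ v (w ∘ σ) = sgnF k (pr ∘ w) σ * v w := by
  induction v using Finsupp.induction_linear with
  | zero => simp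
  | add f g hf hg => simp [hf, hg, mul_add]
  | single u c =>
    have comp_eq_comp : u ∘ σ = w ∘ σ ↔ u = w := σ.surjective.injective_comp_right.eq_iff
    simp only [act_single, Finsupp.single_apply, comp_eq_comp]
    split_ifs with h
    · rw [h, mul_comm]
    · rw [mul_zero]

end Action

section RelativeTrace

variable {k G V : Type*} [CommRing k] [Group G] [AddCommGroup V] [Module k V]
  {ρ : Representation k G V} {Q : Subgroup G} {v : V}

lemma apply_out_mk (hv : ∀ g ∈ Q, ρ g v = v) (g : G) : ρ (g : G ⧸ Q).out v = ρ g v := by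
  obtain ⟨h, hh⟩ := QuotientGroup.mk_out_eq_mul Q g
  rw [hh, map_mul, Module.End.mul_apply, hv h h.2]

variable [Fintype G]

variable (ρ Q v) in
/-- The relative trace `∑ ρ g v` over representatives `g` of `G ⧸ Q`.  The chosen representatives
are `Quotient.out`; the value is independent of this choice when `v` is fixed by `Q`. -/
noncomputable def relTrace : V := ∑ c : G ⧸ Q, ρ c.out v

lemma relTrace_mem_invariants (hv : ∀ g ∈ Q, ρ g v = v) : relTrace ρ Q v ∈ ρ.invariants := by
  refine (ρ.mem_invariants _).2 fun g => ?_
  rw [relTrace, map_sum]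
  refine Fintype.sum_equiv (MulAction.toPerm g) _ _ fun c => ?_
  rw [← Module.End.mul_apply, ← map_mul, ← apply_out_mk hv, ← smul_eq_mul g c.out,
    MulAction.Quotient.coe_smul_out, MulAction.toPerm_apply]

lemma exists_of_apply_relTrace_ne_zero {f : V →ₗ[k] k} (h : f (relTrace ρ Q v) ≠ 0) :
    ∃ g, f (ρ g v) ≠ 0 := by
  rw [relTrace, map_sum] at h
  obtain ⟨c, -, hc⟩ := exists_ne_zero_of_sum_ne_zero h
  exact ⟨_, hc⟩

lemma apply_relTrace (hv : ∀ g ∈ Q, ρ g v = v) {f : V →ₗ[k] k}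
    (hf : ∀ g, f (ρ g v) ≠ 0 → g ∈ Q) : f (relTrace ρ Q v) = f v := by
  rw [relTrace, map_sum, sum_eq_single ((1 : G) : G ⧸ Q), apply_out_mk hv, map_one,
    Module.End.one_apply]
  · intro c _ hc
    by_contra h
    rw [← QuotientGroup.out_eq' c, ne_comm, Ne, QuotientGroup.eq, inv_one, one_mul] at hc
    exact hc (hf _ h)
  · exact fun h => absurd (mem_univ _) h

end RelativeTrace

section FiberPerms

variable {α ι : Type*}

/-- The permutations of `α` preserving each fiber of `κ` (a Young subgroup). -/
def fiberPerms (κ : α → ι) : Subgroup (Equiv.Perm α) where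
  carrier := {σ | ∀ a, κ (σ a) = κ a}
  one_mem' _ := rfl
  mul_mem' hσ hτ a := (hσ _).trans (hτ a)
  inv_mem' {σ} hσ a := by rw [← hσ (σ⁻¹ a)]; exact congrArg κ (σ.apply_symm_apply a)

lemma mem_fiberPerms {κ : α → ι} {σ : Equiv.Perm α} :
    σ ∈ fiberPerms κ ↔ ∀ a, κ (σ a) = κ a := Iff.rfl

lemma swap_mem_fiberPerms [DecidableEq α] {κ : α → ι} {a b : α} (h : κ a = κ b) :
    Equiv.swap a b ∈ fiberPerms κ := by
  intro c
  rw [Equiv.swap_apply_def]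
  split_ifs with ha hb
  · rw [ha, h]
  · rw [hb, h]
  · rfl

lemma comp_swap_eq [DecidableEq α] {β : Type*} {w : α → β} {a b : α} (h : w a = w b) :
    w ∘ Equiv.swap a b = w :=
  funext (swap_mem_fiberPerms h)

end FiberPerms

section TwistedRep

variable {k : Type} [Field k] {d NN : ℕ} (χ : Equiv.Perm (Fin d) →* ℤˣ) (pr : Fin NN → ZMod 2)

/-- The signed place-permutation action on the tensor power, made into a left action and twisted
by the character `χ`. -/
noncomputable def twistedRep : Representation k (Equiv.Perm (Fin d)) (Tens k d NN) where
  toFun σ := ((χ σ : ℤ) : k) • act k pr σ⁻¹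
  map_one' := by
    simp [act_one, Module.End.one_eq_id]
  map_mul' σ τ := by
    rw [mul_inv_rev, act_mul, map_mul, Units.val_mul, Int.cast_mul, smul_mul_smul_comm]
    rfl

/-- The scalar by which a coefficient of a `twistedRep`-invariant tensor changes when its word `w`
is permuted by `σ`. -/
noncomputable def twistedSign (k : Type) [Field k] (σ : Equiv.Perm (Fin d)) (w : Word d NN) : k :=
  ((χ σ : ℤ) : k) * sgnF k (pr ∘ w) σ

variable {χ pr}

lemma intCast_units_mul_self (u : ℤˣ) : ((u : ℤ) : k) * ((u : ℤ) : k) = 1 := by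
  rw [← Int.cast_mul, ← Units.val_mul, Int.units_mul_self, Units.val_one, Int.cast_one]

lemma twistedSign_mul_self (σ : Equiv.Perm (Fin d)) (w : Word d NN) :
    twistedSign χ pr k σ w * twistedSign χ pr k σ w = 1 := by
  rw [twistedSign, mul_mul_mul_comm, intCast_units_mul_self, sgnF_mul_self, mul_one]

lemma twistedSign_ne_zero (σ : Equiv.Perm (Fin d)) (w : Word d NN) :
    twistedSign χ pr k σ w ≠ 0 :=
  left_ne_zero_of_mul_eq_one (twistedSign_mul_self σ w)

lemma twistedRep_apply_apply (σ : Equiv.Perm (Fin d)) (v : Tens k d NN) (w : Word d NN) :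
    twistedRep χ pr σ v w = twistedSign χ pr k σ w * v (w ∘ σ) := by
  have comp_inv : (w ∘ σ) ∘ (σ⁻¹ : Equiv.Perm (Fin d)) = w :=
    funext fun r => congrArg w (σ.apply_symm_apply r)
  have sgnF_inv : sgnF k ((pr ∘ w) ∘ σ) σ⁻¹ = sgnF k (pr ∘ w) σ := by
    have h := sgnF_mul (k := k) (pr ∘ w) σ σ⁻¹
    rw [mul_inv_cancel, sgnF_one] at h
    linear_combination -sgnF k (pr ∘ w) σ * h - sgnF k ((pr ∘ w) ∘ σ) σ⁻¹ *
      sgnF_mul_self (k := k) (pr ∘ w) σ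
  have act_inv := act_apply_comp pr σ⁻¹ v (w ∘ σ)
  rw [comp_inv, ← Function.comp_assoc, sgnF_inv] at act_inv
  simp only [twistedRep, MonoidHom.coe_mk, OneHom.coe_mk, LinearMap.smul_apply,
    Finsupp.smul_apply, smul_eq_mul, twistedSign, mul_assoc, act_inv]

lemma twistedRep_fixed_iff {σ : Equiv.Perm (Fin d)} {v : Tens k d NN} :
    twistedRep χ pr σ v = v ↔ ∀ w, v (w ∘ σ) = twistedSign χ pr k σ w * v w := by
  rw [Finsupp.ext_iff]
  refine forall_congr' fun w => ?_
  rw [twistedRep_apply_apply]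
  constructor <;> intro h
  · rw [← h, ← mul_assoc, twistedSign_mul_self, one_mul]
  · rw [h, ← mul_assoc, twistedSign_mul_self, one_mul]

end TwistedRep

section Shapes

/-- `row` and `col` enumerate the cells of a Young diagram in row-reading order. -/
structure IsRowReading {d : ℕ} (row col : Fin d → ℕ) : Prop where
  row_mono : Monotone row
  col_lt : ∀ {r r'}, row r = row r' → r < r' → col r < col r'
  exists_cell : ∀ {r i j}, i ≤ row r → j ≤ col r → ∃ s, row s = i ∧ col s = j

/-- The entries of `w` weakly increase along each fiber of `line`, ordered by `place`. -/
def LineMono {d NN : ℕ} (line place : Fin d → ℕ) (w : Word d NN) : Prop :=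
  ∀ r s, line r = line s → place r < place s → w r ≤ w s

/-- The entries of `w` weakly increase along each fiber of `line`, and only letters of parity `z`
repeat there.  Row costandardness is the case `z = 1` for rows; the column condition is `z = 0`. -/
def LineStd {d NN : ℕ} (pr : Fin NN → ZMod 2) (z : ZMod 2) (line place : Fin d → ℕ)
    (w : Word d NN) : Prop :=
  ∀ r s, line r = line s → place r < place s → w r ≤ w s ∧ (w r = w s → pr (w r) = z)

/-- The number of entries at most `a` in the first `p` rows of `w`; the functions `rowCount row w`,
compared pointwise, give the dominance order on tableaux. -/
def rowCount {d NN : ℕ} (row : Fin d → ℕ) (w : Word d NN) (p : ℕ) (a : Fin NN) : ℕ :=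
  #{r | row r < p ∧ w r ≤ a}

variable {d NN : ℕ} {row col line place : Fin d → ℕ} {pr : Fin NN → ZMod 2} {z : ZMod 2}
  {w s t : Word d NN}

namespace IsRowReading

lemma inj (S : IsRowReading row col) {r r' : Fin d} (hrow : row r = row r')
    (hcol : col r = col r') : r = r' := by
  by_contra h
  rcases lt_or_gt_of_ne h with h | h
  · exact (S.col_lt hrow h).ne hcol
  · exact (S.col_lt hrow.symm h).ne hcol.symm

lemma lt_of_col_lt (S : IsRowReading row col) {r r' : Fin d} (hrow : row r = row r')
    (hcol : col r < col r') : r < r' := by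
  refine lt_of_not_ge fun h => ?_
  rcases h.eq_or_lt with rfl | h
  · exact hcol.false
  · exact hcol.not_gt (S.col_lt hrow.symm h)

lemma exists_lineMono_comp (S : IsRowReading row col) (w : Word d NN) :
    ∃ σ ∈ fiberPerms row, LineMono row col (w ∘ σ) := by
  let key (r : Fin d) : ℕ ×ₗ Fin NN := toLex (row r, w r)
  have sorted {a b : Fin d} (hab : a ≤ b) := Prod.Lex.toLex_le_toLex.1 (Tuple.monotone_sort key hab)
  have row_sorted : row ∘ Tuple.sort key = row :=
    Tuple.unique_monotone (f := row) (τ := 1)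
      (fun a b hab => (sorted hab).elim (fun h => h.le) fun h => h.1.le) S.row_mono
  refine ⟨_, congrFun row_sorted, fun r r' hrow hcol => ?_⟩
  refine (sorted (S.lt_of_col_lt hrow hcol).le).elim (fun h => ?_) fun h => h.2
  exact absurd h ((congrFun row_sorted r).trans (hrow.trans (congrFun row_sorted r').symm)).not_lt

end IsRowReading

namespace LineStd

lemma lineMono (h : LineStd pr z line place w) : LineMono line place w :=
  fun r r' hline hplace => (h r r' hline hplace).1

lemma eq_of_apply_eq (h : LineStd pr z line place w)
    (hinj : ∀ {r r'}, line r = line r' → place r = place r' → r = r') {r r' : Fin d}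
    (hline : line r = line r') (hw : w r = w r') (hpr : pr (w r) ≠ z) : r = r' := by
  by_contra hne
  rcases lt_or_gt_of_ne (fun hplace => hne (hinj hline hplace)) with hplace | hplace
  · exact hpr ((h r r' hline hplace).2 hw)
  · exact hpr (hw ▸ (h r' r hline.symm hplace).2 hw.symm)

lemma of_adjacent (hfill : ∀ {r j}, j ≤ place r → ∃ r', line r' = line r ∧ place r' = j)
    (hadj : ∀ r r', line r = line r' → place r' = place r + 1 →
      w r ≤ w r' ∧ (w r = w r' → pr (w r) = z)) : LineStd pr z line place w := by
  intro r r' hline hplace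
  obtain ⟨n, hn⟩ := Nat.exists_eq_add_of_lt hplace
  induction n generalizing r' with
  | zero => exact hadj r r' hline hn
  | succ n ih =>
    obtain ⟨r'', hline', hplace'⟩ := hfill (r := r') (j := place r + n + 1) (by lia)
    obtain ⟨hle, heq⟩ := ih r'' (hline.trans hline'.symm) (by lia) hplace'
    have hle' := (hadj r'' r' hline' (by lia)).1
    exact ⟨hle.trans hle', fun h => heq (hle.antisymm (h ▸ hle'))⟩

end LineStd

lemma rowCount_comp {σ : Equiv.Perm (Fin d)} (hσ : σ ∈ fiberPerms row) (w : Word d NN) :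
    rowCount row (w ∘ σ) = rowCount row w := by
  funext p a
  exact card_equiv σ fun r => by simp [mem_fiberPerms.1 hσ]

lemma rowCount_succ (w : Word d NN) (i : ℕ) (a : Fin NN) :
    rowCount row w (i + 1) a = rowCount row w i a + #{r | row r = i ∧ w r ≤ a} := by
  simp only [rowCount, Nat.lt_succ_iff_lt_or_eq, or_and_right]
  rw [filter_or, card_union_of_disjoint]
  exact disjoint_filter.2 fun r _ hlt heq => hlt.1.ne heq.1

-- `w r ≤ a` exactly when more entries of the row are `≤ a` than there are cells left of `r`.
lemma LineMono.apply_le_iff (hw : LineMono row col w) (S : IsRowReading row col) (r : Fin d)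
    (a : Fin NN) :
    w r ≤ a ↔ #{r' | row r' = row r ∧ col r' < col r} < #{r' | row r' = row r ∧ w r' ≤ a} := by
  constructor
  · intro h
    refine card_lt_card ((ssubset_iff_of_subset fun r' hr' => ?_).2 ⟨r, by simp [h], by simp⟩)
    obtain ⟨-, hrow, hcol⟩ := mem_filter.1 hr'
    exact mem_filter.2 ⟨mem_univ _, hrow, (hw _ _ hrow hcol).trans h⟩
  · contrapose!
    intro h
    refine card_le_card fun r' hr' => ?_
    obtain ⟨-, hrow, ha⟩ := mem_filter.1 hr'
    refine mem_filter.2 ⟨mem_univ _, hrow, lt_of_not_ge fun hcol => (ha.trans_lt h).not_ge ?_⟩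
    rcases hcol.eq_or_lt with hcol | hcol
    · rw [S.inj hrow hcol.symm]
    · exact hw _ _ hrow.symm hcol

lemma LineMono.eq_of_rowCount_eq (hs : LineMono row col s) (ht : LineMono row col t)
    (S : IsRowReading row col) (h : rowCount row s = rowCount row t) : s = t := by
  refine funext fun r => eq_of_forall_ge_iff fun a => ?_
  have hs_succ := rowCount_succ (row := row) s (row r) a
  have ht_succ := rowCount_succ (row := row) t (row r) a
  rw [h] at hs_succ
  rw [hs.apply_le_iff S, ht.apply_le_iff S, Nat.add_left_cancel (hs_succ.symm.trans ht_succ)]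

/-- The number of entries at most `a` in the first `p` cells of column `j` of `w`. -/
def colCount {d NN : ℕ} (row col : Fin d → ℕ) (w : Word d NN) (j p : ℕ) (a : Fin NN) : ℕ :=
  #{r | col r = j ∧ row r < p ∧ w r ≤ a}

lemma rowCount_eq_sum_colCount (col : Fin d → ℕ) (w : Word d NN) (p : ℕ) (a : Fin NN) :
    rowCount row w p a = ∑ j ∈ univ.image col, colCount row col w j p a := by
  rw [rowCount, card_eq_sum_card_fiberwise fun r _ => mem_image_of_mem col (mem_univ r)]
  refine sum_congr rfl fun j _ => ?_
  rw [colCount, filter_filter]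
  exact congrArg card (filter_congr fun r _ => and_comm)

lemma LineMono.colCount_comp_le (ht : LineMono col row t) {τ : Equiv.Perm (Fin d)}
    (hτ : τ ∈ fiberPerms col) (j p : ℕ) (a : Fin NN) :
    colCount row col (t ∘ τ) j p a ≤ colCount row col t j p a := by
  by_cases h : ∀ r, col r = j → row r < p → t r ≤ a
  · exact card_le_card (monotone_filter_right _ fun r _ hr => ⟨hr.1, hr.2.1, h r hr.1 hr.2.1⟩)
  · push Not at h
    obtain ⟨r, hcol, hrow, ha⟩ := h
    refine card_le_card_of_injOn τ (fun r' hr' => ?_) τ.injective.injOn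
    obtain ⟨-, hcol', -, ha'⟩ := mem_filter.1 hr'
    have hτcol := (hτ r').trans hcol'
    refine mem_filter.2 ⟨mem_univ _, hτcol, lt_of_not_ge fun hp => ?_, ha'⟩
    exact ha.not_ge ((ht r _ (hcol.trans hτcol.symm) (hrow.trans_le hp)).trans ha')

lemma LineMono.rowCount_comp_le (ht : LineMono col row t) {τ : Equiv.Perm (Fin d)}
    (hτ : τ ∈ fiberPerms col) : rowCount row (t ∘ τ) ≤ rowCount row t := by
  intro p a
  rw [rowCount_eq_sum_colCount col, rowCount_eq_sum_colCount col]
  exact sum_le_sum fun j _ => ht.colCount_comp_le hτ j p a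

lemma IsRowReading.colCount_succ (S : IsRowReading row col) (w : Word d NN) (r : Fin d)
    (a : Fin NN) :
    colCount row col w (col r) (row r + 1) a =
      colCount row col w (col r) (row r) a + if w r ≤ a then 1 else 0 := by
  have split (r' : Fin d) : (col r' = col r ∧ row r' < row r + 1 ∧ w r' ≤ a) ↔
      (col r' = col r ∧ row r' < row r ∧ w r' ≤ a) ∨ (r' = r ∧ w r ≤ a) := by
    refine ⟨fun ⟨hcol, hrow, ha⟩ => ?_, ?_⟩
    · rcases (Nat.lt_succ_iff_lt_or_eq.1 hrow) with hrow | hrow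
      · exact Or.inl ⟨hcol, hrow, ha⟩
      · obtain rfl := S.inj hrow hcol
        exact Or.inr ⟨rfl, ha⟩
    · rintro (⟨hcol, hrow, ha⟩ | ⟨rfl, ha⟩)
      · exact ⟨hcol, hrow.trans (Nat.lt_succ_self _), ha⟩
      · exact ⟨rfl, Nat.lt_succ_self _, ha⟩
  simp only [colCount, split]
  rw [filter_or, card_union_of_disjoint]
  · split_ifs with h <;> simp [h, filter_eq']
  · exact disjoint_filter.2 fun r' _ h h' => (h'.1 ▸ h.2.1).false

lemma LineMono.comp_eq_of_rowCount_eq (ht : LineMono col row t) (S : IsRowReading row col)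
    {τ : Equiv.Perm (Fin d)} (hτ : τ ∈ fiberPerms col)
    (h : rowCount row (t ∘ τ) = rowCount row t) : t ∘ τ = t := by
  have colCount_eq (r : Fin d) (p : ℕ) (a : Fin NN) :
      colCount row col (t ∘ τ) (col r) p a = colCount row col t (col r) p a := by
    have hsum := congrFun (congrFun h p) a
    rw [rowCount_eq_sum_colCount col, rowCount_eq_sum_colCount col,
      sum_eq_sum_iff_of_le fun j _ => ht.colCount_comp_le hτ j p a] at hsum
    exact hsum _ (mem_image_of_mem _ (mem_univ r))
  refine funext fun r => eq_of_forall_ge_iff fun a => ?_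
  have succ_comp := S.colCount_succ (t ∘ τ) r a
  rw [colCount_eq, colCount_eq, S.colCount_succ t, Nat.add_left_cancel_iff] at succ_comp
  grind

end Shapes

section OrbitSums

variable {k : Type} [Field k] {d NN : ℕ} {ι : Type*} (χ : Equiv.Perm (Fin d) →* ℤˣ)
  (pr : Fin NN → ZMod 2) (κ : Fin d → ι)

/-- The restriction of `twistedRep` to the Young subgroup `fiberPerms κ`. -/
noncomputable abbrev fiberRep (k : Type) [Field k] :
    Representation k (fiberPerms κ) (Tens k d NN) :=
  (twistedRep χ pr).comp (fiberPerms κ).subtype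

/-- The signed sum of the rearrangements of `t` within the fibers of `κ`, the analogue of a
divided-power basis element. -/
noncomputable def orbitSum (k : Type) [Field k] (t : Word d NN) : Tens k d NN :=
  relTrace (fiberRep χ pr κ k) ((fiberPerms t).subgroupOf (fiberPerms κ)) (Finsupp.single t 1)

variable {χ pr κ} {t u w : Word d NN} {v : Tens k d NN}

lemma twistedRep_single_apply_ne_zero {σ : Equiv.Perm (Fin d)}
    (h : twistedRep χ pr σ (Finsupp.single t (1 : k)) u ≠ 0) : u ∘ σ = t := by
  rw [twistedRep_apply_apply] at h
  exact (Finsupp.single_apply_ne_zero.1 (right_ne_zero_of_mul h)).1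

lemma twistedRep_single_of_twistedSign_eq_one {σ : Equiv.Perm (Fin d)} (hσ : σ ∈ fiberPerms t)
    (h : twistedSign χ pr k σ t = 1) :
    twistedRep χ pr σ (Finsupp.single t (1 : k)) = Finsupp.single t 1 := by
  ext u
  rw [twistedRep_apply_apply]
  have comp_eq_iff : t = u ∘ σ ↔ t = u := by
    rw [← σ.surjective.injective_comp_right.eq_iff (a := t) (b := u),
      show t ∘ σ = t from funext hσ]
  rw [Finsupp.single_apply, Finsupp.single_apply]
  simp only [comp_eq_iff]
  split_ifs with hu
  · rw [← hu, h, mul_one]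
  · rw [mul_zero]

lemma exists_of_orbitSum_apply_ne_zero (h : orbitSum χ pr κ k t u ≠ 0) :
    ∃ σ ∈ fiberPerms κ, u = t ∘ σ := by
  obtain ⟨g, hg⟩ := exists_of_apply_relTrace_ne_zero (V := Tens k d NN) (f := Finsupp.lapply u) h
  refine ⟨(g : Equiv.Perm (Fin d))⁻¹, inv_mem g.2, ?_⟩
  rw [← twistedRep_single_apply_ne_zero hg]
  exact funext fun r => congrArg u (Equiv.apply_symm_apply _ r).symm

section

variable (ht : ∀ σ ∈ fiberPerms κ, σ ∈ fiberPerms t → twistedSign χ pr k σ t = 1)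
include ht

lemma fiberRep_single_of_mem :
    ∀ g ∈ (fiberPerms t).subgroupOf (fiberPerms κ),
      fiberRep χ pr κ k g (Finsupp.single t 1) = Finsupp.single t 1 :=
  fun g hg => twistedRep_single_of_twistedSign_eq_one hg (ht g g.2 hg)

lemma orbitSum_mem_invariants : orbitSum χ pr κ k t ∈ (fiberRep χ pr κ k).invariants :=
  relTrace_mem_invariants (fiberRep_single_of_mem ht)

lemma orbitSum_apply_self : orbitSum χ pr κ k t t = 1 := by
  refine (apply_relTrace (f := Finsupp.lapply t) (fiberRep_single_of_mem ht) fun g hg => ?_).trans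
    Finsupp.single_eq_same
  exact congrFun (twistedRep_single_apply_ne_zero hg)

end

lemma twistedSign_one_eq_one (h : ∀ {r r'}, κ r = κ r' → t r = t r' → pr (t r) ≠ 0 → r = r') :
    ∀ σ ∈ fiberPerms κ, σ ∈ fiberPerms t → twistedSign 1 pr k σ t = 1 := by
  intro σ hκ ht
  rw [twistedSign,
    sgnF_eq_one_of_odd_fixed (ε := pr ∘ t) fun p hp => (h (hκ p).symm (ht p).symm hp).symm]
  simp

lemma twistedSign_sign_eq_one
    (h : ∀ {r r'}, κ r = κ r' → t r = t r' → pr (t r) ≠ 1 → r = r') :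
    ∀ σ ∈ fiberPerms κ, σ ∈ fiberPerms t → twistedSign Equiv.Perm.sign pr k σ t = 1 := by
  intro σ hκ ht
  have ne_one_of_add_one : ∀ c : ZMod 2, c + 1 ≠ 0 → c ≠ 1 := by decide
  rw [twistedSign, ← sgnF_add_one_of_invariant (ε := pr ∘ t) fun p => congrArg pr (ht p)]
  exact sgnF_eq_one_of_odd_fixed fun p hp =>
    (h (hκ p).symm (ht p).symm (ne_one_of_add_one _ hp)).symm

lemma apply_eq_zero_of_even_repeat (h2 : (2 : k) ≠ 0)
    (hv : v ∈ (fiberRep Equiv.Perm.sign pr κ k).invariants) {r r' : Fin d} (hne : r ≠ r')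
    (hκ : κ r = κ r') (hw : w r = w r') (hpr : pr (w r) = 0) : v w = 0 := by
  have hfix := twistedRep_fixed_iff.1 (hv ⟨_, swap_mem_fiberPerms hκ⟩) w
  have sgnF_eq_one : sgnF k (pr ∘ w) (Equiv.swap r r') = 1 := by
    refine sgnF_eq_one_of_odd_fixed fun p hp => Equiv.swap_apply_of_ne_of_ne ?_ ?_
    · rintro rfl; exact hp hpr
    · rintro rfl; exact hp ((congrArg pr hw).symm.trans hpr)
  rw [Subgroup.subtype_apply, Subgroup.coe_mk, comp_swap_eq hw, twistedSign, sgnF_eq_one,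
    Equiv.Perm.sign_swap hne] at hfix
  push_cast at hfix
  exact (mul_eq_zero.1 (show (2 : k) * v w = 0 by linear_combination hfix)).resolve_left h2

end OrbitSums

section RowInvariants

variable {k : Type} [Field k] {d NN : ℕ} {row col : Fin d → ℕ} {pr : Fin NN → ZMod 2}
  {s t : Word d NN} {v : Tens k d NN}

lemma LineStd.twistedSign_eq_one (ht : LineStd pr 1 row col t) (S : IsRowReading row col) :
    ∀ σ ∈ fiberPerms row, σ ∈ fiberPerms t → twistedSign Equiv.Perm.sign pr k σ t = 1 :=
  twistedSign_sign_eq_one (ht.eq_of_apply_eq S.inj)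

lemma LineStd.orbitSum_apply (ht : LineStd pr 1 row col t) (hs : LineStd pr 1 row col s)
    (S : IsRowReading row col) :
    orbitSum Equiv.Perm.sign pr row k t s = if t = s then 1 else 0 := by
  split_ifs with h
  · rw [← h, orbitSum_apply_self (ht.twistedSign_eq_one S)]
  · by_contra hne
    obtain ⟨σ, hσ, hst⟩ := exists_of_orbitSum_apply_ne_zero hne
    exact h (ht.lineMono.eq_of_rowCount_eq hs.lineMono S (by rw [hst, rowCount_comp hσ]))

lemma IsRowReading.eq_zero_of_forall_lineStd (S : IsRowReading row col) (h2 : (2 : k) ≠ 0)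
    (hv : v ∈ (fiberRep Equiv.Perm.sign pr row k).invariants)
    (h : ∀ s, LineStd pr 1 row col s → v s = 0) : v = 0 := by
  have eq_zero_of_lineMono (s : Word d NN) (hs : LineMono row col s) : v s = 0 := by
    by_cases hstd : LineStd pr 1 row col s
    · exact h s hstd
    unfold LineStd at hstd
    push Not at hstd
    obtain ⟨r, r', hrow, hcol, hrep⟩ := hstd
    obtain ⟨heq, hpr⟩ := hrep (hs r r' hrow hcol)
    have eq_zero_of_ne_one : ∀ c : ZMod 2, c ≠ 1 → c = 0 := by decide
    exact apply_eq_zero_of_even_repeat h2 hv (S.lt_of_col_lt hrow hcol).ne hrow heq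
      (eq_zero_of_ne_one _ hpr)
  ext w
  obtain ⟨σ, hσ, hmono⟩ := S.exists_lineMono_comp w
  have hfix := twistedRep_fixed_iff.1 (hv ⟨σ, hσ⟩) w
  rw [Subgroup.coe_subtype, eq_zero_of_lineMono _ hmono] at hfix
  exact (mul_eq_zero.1 hfix.symm).resolve_left (twistedSign_ne_zero _ _)

lemma IsRowReading.eq_sum_orbitSum (S : IsRowReading row col) (h2 : (2 : k) ≠ 0)
    (hv : v ∈ (fiberRep Equiv.Perm.sign pr row k).invariants) :
    v = ∑ s with LineStd pr 1 row col s, v s • orbitSum Equiv.Perm.sign pr row k s := by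
  refine sub_eq_zero.1 (S.eq_zero_of_forall_lineStd h2 (Submodule.sub_mem _ hv <|
    Submodule.sum_mem _ fun s hs => Submodule.smul_mem _ _ <| orbitSum_mem_invariants <|
      LineStd.twistedSign_eq_one (mem_filter.1 hs).2 S) fun s hs => ?_)
  have apply_s (t : Word d NN) (ht : t ∈ ({t | LineStd pr 1 row col t} : Finset (Word d NN))) :
      (v t • orbitSum Equiv.Perm.sign pr row k t) s = if t = s then v t else 0 := by
    rw [Finsupp.smul_apply, LineStd.orbitSum_apply (mem_filter.1 ht).2 hs S, smul_eq_mul,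
      mul_ite, mul_one, mul_zero]
  rw [Finsupp.sub_apply, Finsupp.finsetSum_apply, sum_congr rfl apply_s, sum_ite_eq',
    if_pos (mem_filter.2 ⟨mem_univ _, hs⟩), sub_self]

end RowInvariants

section Garnir

variable {k : Type} [Field k] {d NN : ℕ} {row col : Fin d → ℕ} {pr : Fin NN → ZMod 2}
  {s t : Word d NN} {b₁ b₂ : Fin d}

/-- The cells `b₁`, `b₂` are vertically adjacent and their entries in `t` violate column
standardness. -/
structure IsColumnViolation {d NN : ℕ} (row col : Fin d → ℕ) (pr : Fin NN → ZMod 2)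
    (t : Word d NN) (b₁ b₂ : Fin d) : Prop where
  col_eq : col b₁ = col b₂
  row_eq : row b₂ = row b₁ + 1
  apply_le : t b₂ ≤ t b₁
  parity_of_eq : t b₂ = t b₁ → pr (t b₁) = 1

/-- The cells of the rows of `b₁` and `b₂` that enter the Garnir relation: the entries at least
`t b₁` of the upper row and those at most `t b₂` of the lower row. -/
def InGarnirBelt {d NN : ℕ} (row : Fin d → ℕ) (t : Word d NN) (b₁ b₂ r : Fin d) : Prop :=
  row r = row b₁ ∧ t b₁ ≤ t r ∨ row r = row b₂ ∧ t r ≤ t b₂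

/-- The coloring whose classes are the Garnir belt and the remaining part of each row. -/
noncomputable def garnirColor {d NN : ℕ} (row : Fin d → ℕ) (t : Word d NN) (b₁ b₂ r : Fin d) :
    Option ℕ :=
  if InGarnirBelt row t b₁ b₂ r then none else some (row r)

/-- The relative trace from the stabilizer of the Garnir coloring to the row group of the signed
orbit sum of `t` over that stabilizer. -/
noncomputable def garnirElement (k : Type) [Field k] {d NN : ℕ} (row : Fin d → ℕ)
    (pr : Fin NN → ZMod 2) (t : Word d NN) (b₁ b₂ : Fin d) : Tens k d NN :=
  relTrace (fiberRep Equiv.Perm.sign pr row k)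
    ((fiberPerms (garnirColor row t b₁ b₂)).subgroupOf (fiberPerms row))
    (orbitSum Equiv.Perm.sign pr (garnirColor row t b₁ b₂) k t)

lemma garnirColor_eq_none_iff {r : Fin d} :
    garnirColor row t b₁ b₂ r = none ↔ InGarnirBelt row t b₁ b₂ r := by
  simp [garnirColor]

lemma inGarnirBelt_congr {r r' : Fin d}
    (h : garnirColor row t b₁ b₂ r = garnirColor row t b₁ b₂ r') :
    InGarnirBelt row t b₁ b₂ r ↔ InGarnirBelt row t b₁ b₂ r' := by
  rw [← garnirColor_eq_none_iff, h, garnirColor_eq_none_iff]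

lemma row_eq_of_garnirColor_eq {r r' : Fin d}
    (h : garnirColor row t b₁ b₂ r = garnirColor row t b₁ b₂ r')
    (hr : ¬InGarnirBelt row t b₁ b₂ r) : row r = row r' := by
  have hr' := (inGarnirBelt_congr h).not.1 hr
  rw [garnirColor, garnirColor, if_neg hr, if_neg hr'] at h
  exact Option.some.inj h

lemma IsRowReading.exists_isColumnViolation (S : IsRowReading row col)
    (h : ¬LineStd pr 0 col row t) : ∃ b₁ b₂, IsColumnViolation row col pr t b₁ b₂ := by
  by_contra hno
  have eq_one_of_ne_zero : ∀ c : ZMod 2, c ≠ 0 → c = 1 := by decide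
  refine h (LineStd.of_adjacent (fun hj => ?_) fun r r' hcol hrow => ?_)
  · obtain ⟨r', hrow, hcol⟩ := S.exists_cell hj le_rfl
    exact ⟨r', hcol, hrow⟩
  · by_contra hbad
    rw [not_and_or, not_le, Classical.not_imp] at hbad
    rcases hbad with hlt | ⟨heq, hpr⟩
    · exact hno ⟨r, r', hcol, hrow, hlt.le, fun h => absurd h hlt.ne⟩
    · exact hno ⟨r, r', hcol, hrow, heq.ge, fun _ => eq_one_of_ne_zero _ hpr⟩

lemma mem_coinvariantsKer_of_swap_fixed (h2 : (2 : k) ≠ 0) {v : Tens k d NN} {a b : Fin d}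
    (hne : a ≠ b) (hcol : col a = col b)
    (hv : twistedRep Equiv.Perm.sign pr (Equiv.swap a b) v = v) :
    v ∈ Representation.Coinvariants.ker (fiberRep 1 pr col k) := by
  have apply_swap : fiberRep 1 pr col k ⟨_, swap_mem_fiberPerms hcol⟩ v = -v := by
    ext w
    have hw := twistedRep_fixed_iff.1 hv w
    have hw' := twistedRep_apply_apply (χ := 1) (pr := pr) (Equiv.swap a b) v w
    rw [twistedSign, Equiv.Perm.sign_swap hne] at hw
    rw [hw, twistedSign] at hw'
    refine hw'.trans ?_
    simp [← mul_assoc, sgnF_mul_self]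
  have hmem := Representation.Coinvariants.sub_mem_ker (ρ := fiberRep 1 pr col k)
    ⟨_, swap_mem_fiberPerms hcol⟩ v
  rw [apply_swap, show -v - v = (-2 : k) • v by module] at hmem
  exact (Submodule.smul_mem_iff _ (neg_ne_zero.2 h2)).1 hmem

lemma mem_fiberPerms_garnirColor {σ π : Equiv.Perm (Fin d)}
    (hσ : σ ∈ fiberPerms row) (hπ : π ∈ fiberPerms (garnirColor row t b₁ b₂))
    (h : t ∘ σ = t ∘ π) : σ ∈ fiberPerms (garnirColor row t b₁ b₂) := by
  have not_belt (r : Fin d) (hr : ¬InGarnirBelt row t b₁ b₂ r) :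
      ¬InGarnirBelt row t b₁ b₂ (σ r) := by
    have same_row : row (π r) = row (σ r) :=
      (row_eq_of_garnirColor_eq (hπ r).symm hr).symm.trans (hσ r).symm
    have same_entry : t (σ r) = t (π r) := congrFun h r
    rw [← inGarnirBelt_congr (hπ r), InGarnirBelt] at hr
    rwa [InGarnirBelt, same_entry, ← same_row]
  intro r
  by_cases hr : InGarnirBelt row t b₁ b₂ r
  · have hσr : InGarnirBelt row t b₁ b₂ (σ r) := by
      by_contra hσr
      exact Equiv.Perm.perm_symm_on_of_perm_on_finite (f := σ) not_belt hσr
        ((σ.symm_apply_apply r).symm ▸ hr)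
    rw [garnirColor_eq_none_iff.2 hr, garnirColor_eq_none_iff.2 hσr]
  · rw [garnirColor, garnirColor, if_neg hr, if_neg (not_belt r hr), hσ r]

section Violation

variable (hb : IsColumnViolation row col pr t b₁ b₂)
include hb

lemma IsColumnViolation.twistedSign_eq_one (ht : LineStd pr 1 row col t)
    (S : IsRowReading row col) :
    ∀ σ ∈ fiberPerms (garnirColor row t b₁ b₂), σ ∈ fiberPerms t →
      twistedSign Equiv.Perm.sign pr k σ t = 1 := by
  refine twistedSign_sign_eq_one fun {r r'} hcolor heq hpr => ?_
  refine ht.eq_of_apply_eq S.inj ?_ heq hpr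
  by_cases hr : InGarnirBelt row t b₁ b₂ r
  · have parity {p p' : Fin d} (hp : t b₁ ≤ t p) (hp' : t p' ≤ t b₂) (h : t p = t p') :
        pr (t p) = 1 := by
      have hpb : t p = t b₁ := ((h.trans_le hp').trans hb.apply_le).antisymm hp
      exact hpb ▸ hb.parity_of_eq (hb.apply_le.antisymm (hpb ▸ h.trans_le hp'))
    rcases hr, (inGarnirBelt_congr hcolor).1 hr with
      ⟨⟨hrow, h⟩ | ⟨hrow, h⟩, ⟨hrow', h'⟩ | ⟨hrow', h'⟩⟩
    · exact hrow.trans hrow'.symm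
    · exact absurd (parity h h' heq) hpr
    · exact absurd (heq ▸ parity h' h heq.symm) hpr
    · exact hrow.trans hrow'.symm
  · exact row_eq_of_garnirColor_eq hcolor hr

lemma IsColumnViolation.exists_inGarnirBelt_col_eq (ht : LineStd pr 1 row col t)
    (S : IsRowReading row col) {p : Fin d} (hp : row p = row b₁ ∨ row p = row b₂) :
    ∃ r, InGarnirBelt row t b₁ b₂ r ∧ col r = col p := by
  have hrow := hb.row_eq
  rcases lt_or_ge (col p) (col b₁) with h | h
  · obtain ⟨r, hr, hcol⟩ := S.exists_cell (r := b₂) le_rfl (hb.col_eq ▸ h.le)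
    exact ⟨r, Or.inr ⟨hr, (ht r b₂ hr (hcol.trans_lt (hb.col_eq ▸ h))).1⟩, hcol⟩
  · obtain ⟨r, hr, hcol⟩ := S.exists_cell (r := p) (i := row b₁) (by lia) le_rfl
    refine ⟨r, Or.inl ⟨hr, ?_⟩, hcol⟩
    rcases h.eq_or_lt with h | h
    · rw [S.inj hr (hcol.trans h.symm)]
    · exact (ht b₁ r hr.symm (hcol.symm ▸ h)).1

lemma IsColumnViolation.exists_inGarnirBelt_ne (ht : LineStd pr 1 row col t)
    (S : IsRowReading row col) {σ : Equiv.Perm (Fin d)} (hσ : σ ∈ fiberPerms row) :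
    ∃ r r', InGarnirBelt row t b₁ b₂ r ∧ InGarnirBelt row t b₁ b₂ r' ∧ r ≠ r' ∧
      col (σ r) = col (σ r') := by
  let belt : Finset (Fin d) := {r | InGarnirBelt row t b₁ b₂ r}
  have col_mem_image : ∀ r ∈ belt, col (σ r) ∈ belt.image col := fun r hr => by
    obtain ⟨r', hr', hcol⟩ := hb.exists_inGarnirBelt_col_eq ht S (p := σ r)
      ((mem_filter.1 hr).2.imp (fun h => (hσ r).trans h.1) fun h => (hσ r).trans h.1)
    exact mem_image.2 ⟨r', mem_filter.2 ⟨mem_univ _, hr'⟩, hcol⟩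
  have card_image_lt : #(belt.image col) < #belt := by
    refine card_image_le.lt_of_ne fun h => ?_
    have hb₁₂ := card_image_iff.1 h (mem_filter.2 ⟨mem_univ _, Or.inl ⟨rfl, le_rfl⟩⟩)
      (mem_filter.2 ⟨mem_univ _, Or.inr ⟨rfl, le_rfl⟩⟩) hb.col_eq
    exact absurd (hb₁₂ ▸ hb.row_eq) (Nat.lt_succ_self _).ne
  obtain ⟨r, hr, r', hr', hne, hcol⟩ :=
    exists_ne_map_eq_of_card_lt_of_maps_to card_image_lt col_mem_image
  exact ⟨r, r', (mem_filter.1 hr).2, (mem_filter.1 hr').2, hne, hcol⟩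

lemma IsColumnViolation.orbitSum_mem_invariants (ht : LineStd pr 1 row col t)
    (S : IsRowReading row col) :
    orbitSum Equiv.Perm.sign pr (garnirColor row t b₁ b₂) k t ∈
      (fiberRep Equiv.Perm.sign pr (garnirColor row t b₁ b₂) k).invariants :=
  SuperSchur.orbitSum_mem_invariants (hb.twistedSign_eq_one ht S)

-- A row permutation moves two belt cells into a common column, and exchanging their images negates
-- the corresponding term of the trace modulo the column relations.
lemma IsColumnViolation.garnirElement_mem_coinvariantsKer (ht : LineStd pr 1 row col t)
    (S : IsRowReading row col) (h2 : (2 : k) ≠ 0) :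
    garnirElement k row pr t b₁ b₂ ∈
      Representation.Coinvariants.ker (fiberRep 1 pr col k) := by
  refine Submodule.sum_mem _ fun c _ => ?_
  obtain ⟨σ, hσ⟩ := c.out
  obtain ⟨r, r', hr, hr', hne, hcol⟩ := hb.exists_inGarnirBelt_ne ht S hσ
  have swap_fixed : twistedRep Equiv.Perm.sign pr (Equiv.swap r r')
      (orbitSum Equiv.Perm.sign pr (garnirColor row t b₁ b₂) k t) = _ :=
    hb.orbitSum_mem_invariants ht S ⟨_, swap_mem_fiberPerms
      ((garnirColor_eq_none_iff.2 hr).trans (garnirColor_eq_none_iff.2 hr').symm)⟩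
  refine mem_coinvariantsKer_of_swap_fixed h2 (σ.injective.ne hne) hcol ?_
  change twistedRep _ pr _ (twistedRep _ pr σ _) = twistedRep _ pr σ _
  rw [← Module.End.mul_apply, ← map_mul, Equiv.swap_apply_apply, inv_mul_cancel_right, map_mul,
    Module.End.mul_apply, swap_fixed]

lemma IsColumnViolation.rowCount_le_comp {π : Equiv.Perm (Fin d)}
    (hπ : π ∈ fiberPerms (garnirColor row t b₁ b₂)) :
    rowCount row t ≤ rowCount row (t ∘ π) := by
  intro p a
  have hrow := hb.row_eq
  by_cases h : t b₁ ≤ a ∨ row b₂ < p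
  · have maps_gt (r : Fin d) (hr : row r < p) (ha : a < t (π r)) : row (π r) < p := by
      by_cases hbelt : InGarnirBelt row t b₁ b₂ (π r)
      · rcases (inGarnirBelt_congr (hπ r)).1 hbelt, hbelt, h with
          ⟨⟨h₁, -⟩ | ⟨h₁, -⟩, ⟨h₂, -⟩ | ⟨h₂, hle⟩, h₃ | h₃⟩ <;> first
          | lia
          | exact absurd (ha.trans_le (hle.trans (hb.apply_le.trans h₃))) (lt_irrefl _)
      · exact (row_eq_of_garnirColor_eq (hπ r) hbelt).trans_lt hr
    have card_le : #{r | row r < p ∧ ¬t (π r) ≤ a} ≤ #{r | row r < p ∧ ¬t r ≤ a} :=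
      card_le_card_of_injOn π (fun r hr => by
        obtain ⟨-, hrp, har⟩ := mem_filter.1 hr
        exact mem_filter.2 ⟨mem_univ _, maps_gt r hrp (not_le.1 har), har⟩) π.injective.injOn
    have count := card_filter_add_card_filter_not (s := {r | row r < p}) (t · ≤ a)
    have count_comp := card_filter_add_card_filter_not (s := {r | row r < p}) fun r => t (π r) ≤ a
    simp only [filter_filter] at count count_comp
    simp only [rowCount, Function.comp_apply]
    lia
  · push Not at h
    refine card_le_card_of_injOn π.symm (fun r hr => ?_) π.symm.injective.injOn
    obtain ⟨-, hrp, har⟩ := mem_filter.1 hr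
    have not_belt : ¬InGarnirBelt row t b₁ b₂ r := by
      rintro (⟨-, hle⟩ | ⟨hr, -⟩)
      · exact h.1.not_ge (hle.trans har)
      · exact (hr ▸ hrp).not_ge h.2
    have same_row := row_eq_of_garnirColor_eq (inv_mem hπ r).symm not_belt
    exact mem_filter.2
      ⟨mem_univ _, same_row ▸ hrp, (congrArg t (π.apply_symm_apply r)).trans_le har⟩

end Violation

lemma exists_of_garnirElement_apply_ne_zero (h : garnirElement k row pr t b₁ b₂ s ≠ 0) :
    ∃ σ ∈ fiberPerms row, ∃ π ∈ fiberPerms (garnirColor row t b₁ b₂), s ∘ σ = t ∘ π := by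
  obtain ⟨σ, hσ⟩ := exists_of_apply_relTrace_ne_zero (V := Tens k d NN) (f := Finsupp.lapply s) h
  refine ⟨σ, σ.2, exists_of_orbitSum_apply_ne_zero (k := k) (χ := Equiv.Perm.sign) (pr := pr) ?_⟩
  exact right_ne_zero_of_mul (twistedRep_apply_apply (k := k) _ _ _ ▸ hσ)

section Straightening

variable (hb : IsColumnViolation row col pr t b₁ b₂) (ht : LineStd pr 1 row col t)
  (S : IsRowReading row col)
include hb ht S

lemma IsColumnViolation.garnirElement_mem_invariants :
    garnirElement k row pr t b₁ b₂ ∈ (fiberRep Equiv.Perm.sign pr row k).invariants :=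
  relTrace_mem_invariants fun g hg => hb.orbitSum_mem_invariants ht S ⟨g, hg⟩

lemma IsColumnViolation.garnirElement_apply_self :
    garnirElement k row pr t b₁ b₂ t = 1 := by
  refine (apply_relTrace (ρ := fiberRep Equiv.Perm.sign pr row k) (f := Finsupp.lapply t)
    (fun g hg => hb.orbitSum_mem_invariants ht S ⟨g, hg⟩) fun g hg => ?_).trans
    (orbitSum_apply_self (hb.twistedSign_eq_one ht S))
  obtain ⟨π, hπ, h⟩ := exists_of_orbitSum_apply_ne_zero
    (right_ne_zero_of_mul (twistedRep_apply_apply (k := k) _ _ _ ▸ hg))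
  exact mem_fiberPerms_garnirColor g.2 hπ h

lemma IsColumnViolation.rowCount_lt_of_garnirElement_apply_ne_zero (hs : LineMono row col s)
    (h : garnirElement k row pr t b₁ b₂ s ≠ 0) (hne : s ≠ t) :
    rowCount row t < rowCount row s := by
  obtain ⟨σ, hσ, π, hπ, hst⟩ := exists_of_garnirElement_apply_ne_zero h
  refine lt_of_le_of_ne ?_ fun heq => hne (hs.eq_of_rowCount_eq ht.lineMono S heq.symm)
  rw [← rowCount_comp hσ s, hst]
  exact hb.rowCount_le_comp hπ

end Straightening

end Garnir

section TriangularFamily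

variable {ι P K V : Type*} [Preorder P] [Field K] [AddCommGroup V] [Module K V]
  {z : ι → V} {ψ : ι → V →ₗ[K] K} {p : ι → P}

lemma eq_zero_of_triangular [Fintype ι] (hdiag : ∀ t, ψ t (z t) ≠ 0)
    (htri : ∀ s t, s ≠ t → ψ t (z s) ≠ 0 → p s < p t) {c : ι → K}
    (hc : ∀ t, ψ t (∑ s, c s • z s) = 0) : c = 0 := by
  have wf : WellFounded (Function.onFun (· < ·) p) :=
    Set.wellFoundedOn_range.1 (Set.finite_range p).wellFoundedOn
  funext t
  induction t using wf.induction with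
  | _ t ih =>
  have single_term := hc t
  rw [map_sum, sum_eq_single t, map_smul, smul_eq_mul] at single_term
  · exact (mul_eq_zero.1 single_term).resolve_right (hdiag t)
  · intro s _ hst
    by_cases hs : ψ t (z s) = 0
    · rw [map_smul, hs, smul_zero]
    · rw [ih s (htri s t hst hs), Pi.zero_apply, zero_smul, map_zero]
  · exact fun h => absurd (mem_univ t) h

lemma linearIndependent_of_triangular [Finite ι] (hdiag : ∀ t, ψ t (z t) ≠ 0)
    (htri : ∀ s t, s ≠ t → ψ t (z s) ≠ 0 → p s < p t) : LinearIndependent K z := by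
  cases nonempty_fintype ι
  exact Fintype.linearIndependent_iff.2 fun c hc =>
    congrFun (eq_zero_of_triangular hdiag htri fun t => by rw [hc, map_zero])

section WeightSpaces

variable {W : Type*} {wt : ι → W} {weightSpace : W → Submodule K V}

lemma span_inf_weightSpace_of_triangular [Finite ι] (hdiag : ∀ t, ψ t (z t) ≠ 0)
    (htri : ∀ s t, s ≠ t → ψ t (z s) ≠ 0 → p s < p t) (hz : ∀ t, z t ∈ weightSpace (wt t))
    (hψ : ∀ t μ, wt t ≠ μ → ∀ x ∈ weightSpace μ, ψ t x = 0) (μ : W) :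
    Submodule.span K (Set.range z) ⊓ weightSpace μ =
      Submodule.span K (Set.range (z ∘ (Subtype.val : {t // wt t = μ} → ι))) := by
  cases nonempty_fintype ι
  refine le_antisymm ?_ (le_inf (Submodule.span_mono (Set.range_comp_subset_range _ z))
    (Submodule.span_le.2 ?_))
  · rintro x ⟨hx, hxμ⟩
    obtain ⟨c, rfl⟩ := (Submodule.mem_span_range_iff_exists_fun K).1 hx
    have off_weight : (fun t => if wt t = μ then 0 else c t) = 0 := by
      refine eq_zero_of_triangular hdiag htri fun t => ?_
      by_cases ht : wt t = μ
      · rw [map_sum]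
        refine sum_eq_zero fun s _ => ?_
        split_ifs with hs
        · rw [zero_smul, map_zero]
        · rw [map_smul, hψ t (wt s) (fun h => hs (h ▸ ht)) _ (hz s), smul_zero]
      · refine Eq.trans ?_ (hψ t μ ht _ hxμ)
        rw [map_sum, map_sum]
        refine sum_congr rfl fun s _ => ?_
        split_ifs with hs
        · rw [zero_smul, map_zero, map_smul, hψ t μ ht _ (hs ▸ hz s), smul_zero]
        · rfl
    refine Submodule.sum_mem _ fun t _ => ?_
    by_cases ht : wt t = μ
    · exact Submodule.smul_mem _ _ (Submodule.subset_span ⟨⟨t, ht⟩, rfl⟩)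
    · have hct : c t = 0 := (if_neg ht).symm.trans (congrFun off_weight t)
      rw [hct, zero_smul]
      exact Submodule.zero_mem _
  · rintro _ ⟨t, rfl⟩
    exact (congrArg weightSpace t.2) ▸ hz t

lemma finrank_span_inf_weightSpace_of_triangular [Fintype ι]
    (hdiag : ∀ t, ψ t (z t) ≠ 0)
    (htri : ∀ s t, s ≠ t → ψ t (z s) ≠ 0 → p s < p t) (hz : ∀ t, z t ∈ weightSpace (wt t))
    (hψ : ∀ t μ, wt t ≠ μ → ∀ x ∈ weightSpace μ, ψ t x = 0) (μ : W) :
    Module.finrank K ↥(Submodule.span K (Set.range z) ⊓ weightSpace μ) = #{t | wt t = μ} := by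
  rw [span_inf_weightSpace_of_triangular hdiag htri hz hψ, finrank_span_eq_card
    ((linearIndependent_of_triangular hdiag htri).comp _ Subtype.val_injective),
    Fintype.card_subtype]

end WeightSpaces

end TriangularFamily

section StandardBasis

variable {k : Type} [Field k] {d NN : ℕ} {row col : Fin d → ℕ} {pr : Fin NN → ZMod 2}
  {s t w : Word d NN} {v : Tens k d NN}

/-- Costandard fillings: rows repeat only odd letters and columns only even ones. -/
def IsCostandard {d NN : ℕ} (pr : Fin NN → ZMod 2) (row col : Fin d → ℕ) (w : Word d NN) : Prop :=
  LineStd pr 1 row col w ∧ LineStd pr 0 col row w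

variable (k row col pr) in
/-- The span of the row orbit sums of the costandard fillings. -/
noncomputable def costandardSpan : Submodule k (Tens k d NN) :=
  Submodule.span k (Set.range fun t : {t // IsCostandard pr row col t} =>
    orbitSum Equiv.Perm.sign pr row k t.1)

lemma LineStd.orbitSum_mem_sup (ht : LineStd pr 1 row col t) (S : IsRowReading row col)
    (h2 : (2 : k) ≠ 0) :
    orbitSum Equiv.Perm.sign pr row k t ∈
      costandardSpan k row col pr ⊔ Representation.Coinvariants.ker (fiberRep 1 pr col k) := by
  have wf : WellFounded (Function.onFun (· > ·) (rowCount (NN := NN) row)) :=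
    Set.wellFoundedOn_range.1 (Set.finite_range _).wellFoundedOn
  induction t using wf.induction with
  | _ t ih =>
  by_cases hcol : LineStd pr 0 col row t
  · exact Submodule.mem_sup_left (Submodule.subset_span ⟨⟨t, ht, hcol⟩, rfl⟩)
  obtain ⟨b₁, b₂, hb⟩ := S.exists_isColumnViolation hcol
  have expansion := S.eq_sum_orbitSum h2 (hb.garnirElement_mem_invariants (k := k) ht S)
  rw [← add_sum_erase _ _ (mem_filter.2 ⟨mem_univ t, ht⟩), hb.garnirElement_apply_self ht S,
    one_smul] at expansion
  rw [← sub_eq_iff_eq_add.2 expansion]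
  refine Submodule.sub_mem _
    (Submodule.mem_sup_right (hb.garnirElement_mem_coinvariantsKer ht S h2))
    (Submodule.sum_mem _ fun s hs => ?_)
  obtain ⟨hne, hs⟩ := mem_erase.1 hs
  replace hs := (mem_filter.1 hs).2
  by_cases hzero : garnirElement k row pr t b₁ b₂ s = 0
  · rw [hzero, zero_smul]
    exact Submodule.zero_mem _
  · exact Submodule.smul_mem _ _ <|
      ih s (hb.rowCount_lt_of_garnirElement_apply_ne_zero ht S hs.lineMono hzero hne) hs

lemma map_mkQ_invariants_eq (S : IsRowReading row col) (h2 : (2 : k) ≠ 0) :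
    (fiberRep Equiv.Perm.sign pr row k).invariants.map
        (Representation.Coinvariants.ker (fiberRep 1 pr col k)).mkQ =
      (costandardSpan k row col pr).map
        (Representation.Coinvariants.ker (fiberRep 1 pr col k)).mkQ := by
  refine le_antisymm ?_ (Submodule.map_mono (Submodule.span_le.2 ?_))
  · rw [Submodule.map_le_iff_le_comap, Submodule.comap_map_mkQ, sup_comm]
    intro v hv
    rw [S.eq_sum_orbitSum h2 hv]
    exact Submodule.sum_mem _ fun s hs => Submodule.smul_mem _ _ <|
      LineStd.orbitSum_mem_sup (mem_filter.1 hs).2 S h2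
  · rintro _ ⟨t, rfl⟩
    exact orbitSum_mem_invariants (t.2.1.twistedSign_eq_one S)

/-- Pairing with the column orbit sum of `t`. -/
noncomputable def columnPairing (pr : Fin NN → ZMod 2) (col : Fin d → ℕ) (k : Type) [Field k]
    (t : Word d NN) : Tens k d NN →ₗ[k] k :=
  Finsupp.linearCombination k (orbitSum 1 pr col k t)

lemma columnPairing_apply (t : Word d NN) (v : Tens k d NN) :
    columnPairing pr col k t v = ∑ w, v w * orbitSum 1 pr col k t w :=
  (Finsupp.linearCombination_apply ..).trans
    (Finsupp.sum_fintype _ _ fun _ => zero_smul ..)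

lemma IsCostandard.column_twistedSign_eq_one (ht : IsCostandard pr row col t)
    (S : IsRowReading row col) :
    ∀ τ ∈ fiberPerms col, τ ∈ fiberPerms t → twistedSign 1 pr k τ t = 1 :=
  twistedSign_one_eq_one (ht.2.eq_of_apply_eq fun hcol hrow => S.inj hrow hcol)

lemma IsCostandard.coinvariantsKer_le_ker_columnPairing (ht : IsCostandard pr row col t)
    (S : IsRowReading row col) :
    Representation.Coinvariants.ker (fiberRep 1 pr col k) ≤
      LinearMap.ker (columnPairing pr col k t) := by
  refine Submodule.span_le.2 ?_
  rintro _ ⟨⟨τ, v⟩, rfl⟩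
  rw [SetLike.mem_coe, LinearMap.mem_ker, map_sub, sub_eq_zero, columnPairing_apply,
    columnPairing_apply]
  refine Eq.trans (sum_congr rfl fun w _ => ?_)
    ((τ.1.symm.arrowCongr (Equiv.refl (Fin NN))).sum_comp
      fun w => v w * orbitSum 1 pr col k t w)
  have orbitSum_comp : orbitSum 1 pr col k t (w ∘ τ.1) =
      twistedSign 1 pr k τ.1 w * orbitSum 1 pr col k t w := twistedRep_fixed_iff.1
    (orbitSum_mem_invariants (ht.column_twistedSign_eq_one (k := k) S) τ) w
  change twistedRep 1 pr τ.1 v w * _ = v (w ∘ τ.1) * orbitSum 1 pr col k t (w ∘ τ.1)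
  rw [twistedRep_apply_apply, orbitSum_comp]
  ring

lemma exists_of_columnPairing_ne_zero (h : columnPairing pr col k t v ≠ 0) :
    ∃ τ ∈ fiberPerms col, v (t ∘ τ) ≠ 0 := by
  rw [columnPairing_apply] at h
  obtain ⟨w, -, hw⟩ := exists_ne_zero_of_sum_ne_zero h
  obtain ⟨τ, hτ, rfl⟩ := exists_of_orbitSum_apply_ne_zero (right_ne_zero_of_mul hw)
  exact ⟨τ, hτ, left_ne_zero_of_mul hw⟩

lemma IsCostandard.columnPairing_orbitSum_self (ht : IsCostandard pr row col t)
    (S : IsRowReading row col) :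
    columnPairing pr col k t (orbitSum Equiv.Perm.sign pr row k t) = 1 := by
  rw [columnPairing_apply, sum_eq_single t]
  · rw [orbitSum_apply_self (ht.1.twistedSign_eq_one S),
      orbitSum_apply_self (ht.column_twistedSign_eq_one S), one_mul]
  · intro w _ hne
    by_contra h
    obtain ⟨τ, hτ, rfl⟩ := exists_of_orbitSum_apply_ne_zero (right_ne_zero_of_mul h)
    obtain ⟨σ, hσ, hστ⟩ := exists_of_orbitSum_apply_ne_zero (left_ne_zero_of_mul h)
    exact hne (ht.2.lineMono.comp_eq_of_rowCount_eq S hτ (by rw [hστ, rowCount_comp hσ]))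
  · exact fun h => absurd (mem_univ t) h

lemma IsCostandard.rowCount_lt_of_columnPairing_ne_zero (hs : IsCostandard pr row col s)
    (ht : IsCostandard pr row col t) (S : IsRowReading row col) (hne : s ≠ t)
    (h : columnPairing pr col k t (orbitSum Equiv.Perm.sign pr row k s) ≠ 0) :
    rowCount row s < rowCount row t := by
  obtain ⟨τ, hτ, hτs⟩ := exists_of_columnPairing_ne_zero h
  obtain ⟨σ, hσ, hτσ⟩ := exists_of_orbitSum_apply_ne_zero hτs
  refine lt_of_le_of_ne ?_ fun heq => hne (hs.1.lineMono.eq_of_rowCount_eq ht.1.lineMono S heq)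
  rw [← rowCount_comp hσ s, ← hτσ]
  exact ht.2.lineMono.rowCount_comp_le hτ

lemma wtW_comp (w : Word d NN) (σ : Equiv.Perm (Fin d)) : wtW (w ∘ σ) = wtW w :=
  funext fun a => card_equiv σ fun r => by simp

lemma mem_wtSpan {μ : Fin NN → ℕ} : v ∈ WtSpan k d NN μ ↔ ∀ w, v w ≠ 0 → wtW w = μ := by
  have wtSpan_eq : WtSpan k d NN μ = Finsupp.supported k k {w | wtW w = μ} := by
    rw [Finsupp.supported_eq_span_single, WtSpan]
    exact congrArg _ (Set.ext fun x => exists_congr fun w => and_congr_right' eq_comm)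
  rw [wtSpan_eq, Finsupp.mem_supported]
  exact forall_congr' fun w => imp_congr_left Finsupp.mem_support_iff

lemma orbitSum_mem_wtSpan {ι : Type*} {χ : Equiv.Perm (Fin d) →* ℤˣ} (κ : Fin d → ι) :
    orbitSum χ pr κ k t ∈ WtSpan k d NN (wtW t) := by
  refine mem_wtSpan.2 fun w hw => ?_
  obtain ⟨σ, -, rfl⟩ := exists_of_orbitSum_apply_ne_zero hw
  exact wtW_comp t σ

lemma columnPairing_eq_zero_of_mem_wtSpan {μ : Fin NN → ℕ} (hv : v ∈ WtSpan k d NN μ)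
    (hne : wtW t ≠ μ) : columnPairing pr col k t v = 0 := by
  by_contra h
  obtain ⟨τ, -, hτ⟩ := exists_of_columnPairing_ne_zero h
  exact hne (wtW_comp t τ ▸ mem_wtSpan.1 hv _ hτ)

lemma finrank_map_mkQ_invariants_inf (S : IsRowReading row col) (h2 : (2 : k) ≠ 0)
    (μ : Fin NN → ℕ) :
    Module.finrank k ↥((fiberRep Equiv.Perm.sign pr row k).invariants.map
        (Representation.Coinvariants.ker (fiberRep 1 pr col k)).mkQ ⊓
      (WtSpan k d NN μ).map (Representation.Coinvariants.ker (fiberRep 1 pr col k)).mkQ) =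
      #{t | IsCostandard pr row col t ∧ wtW t = μ} := by
  rw [map_mkQ_invariants_eq S h2, costandardSpan, Submodule.map_span, ← Set.range_comp,
    finrank_span_inf_weightSpace_of_triangular (p := fun t => rowCount row t.1)
      (wt := fun t => wtW t.1)
      (ψ := fun t : {t // IsCostandard pr row col t} =>
        Submodule.liftQ _ _ (t.2.coinvariantsKer_le_ker_columnPairing S))
      (weightSpace := fun μ => (WtSpan k d NN μ).map
        (Representation.Coinvariants.ker (fiberRep 1 pr col k)).mkQ)]
  · rw [← card_map (Function.Embedding.subtype _)]
    congr 1
    ext t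
    simp [and_comm]
  · exact fun t => (t.2.columnPairing_orbitSum_self S).trans_ne one_ne_zero
  · exact fun s t hne =>
      s.2.rowCount_lt_of_columnPairing_ne_zero t.2 S (Subtype.coe_ne_coe.2 hne)
  · exact fun t => Submodule.mem_map_of_mem (orbitSum_mem_wtSpan row)
  · rintro t μ hne _ ⟨v, hv, rfl⟩
    exact columnPairing_eq_zero_of_mem_wtSpan hv hne

end StandardBasis

section Intertwining

lemma map_coinvariantsKer_of_intertwining {R G H V W : Type*} [CommRing R] [Group G] [Group H]
    [AddCommGroup V] [Module R V] [AddCommGroup W] [Module R W] {ρ : Representation R G V}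
    {η : Representation R H W} (φ : G ≃ H) (e : V ≃ₗ[R] W)
    (h : ∀ g v, e (ρ g v) = η (φ g) (e v)) :
    (Representation.Coinvariants.ker ρ).map (e : V →ₗ[R] W) =
      Representation.Coinvariants.ker η := by
  rw [Representation.Coinvariants.ker, Representation.Coinvariants.ker, Submodule.map_span,
    ← Set.range_comp, ← (φ.prodCongr e.toEquiv).surjective.range_comp]
  exact congrArg _ (congrArg _ (funext fun x => by simp [h]))

end Intertwining

section ColumnTwist

variable {k : Type} [Field k] {d NN : ℕ} {row col : Fin d → ℕ} {pr : Fin NN → ZMod 2}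
  {v : Tens k d NN}

/-- The sign `∏ᵣ (-1) ^ (col r * pr (w r))`: an odd letter contributes its column index. -/
noncomputable def columnSign (pr : Fin NN → ZMod 2) (col : Fin d → ℕ) (k : Type) [Field k]
    (w : Word d NN) : k :=
  ∏ r, (-1 : k) ^ ((pr (w r)).val * col r)

lemma columnSign_mul_self (w : Word d NN) :
    columnSign pr col k w * columnSign pr col k w = 1 := by
  rw [columnSign, ← prod_mul_distrib]
  exact prod_eq_one fun r _ => neg_one_pow_mul_self _

lemma columnSign_comp (w : Word d NN) (σ : Equiv.Perm (Fin d)) :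
    columnSign pr col k (w ∘ σ) = columnSign pr (col ∘ (σ⁻¹ : Equiv.Perm (Fin d))) k w :=
  Fintype.prod_equiv σ _ _ fun r => by
    rw [Function.comp_apply, Function.comp_apply, show σ⁻¹ (σ r) = r from σ.symm_apply_apply r]

/-- Rescaling of the basis words by their column signs.  It turns row invariants for the reversed
parity into row anti-invariants for the original one, without changing the column relations. -/
noncomputable def columnTwist (pr : Fin NN → ZMod 2) (col : Fin d → ℕ) (k : Type) [Field k] :
    Tens k d NN ≃ₗ[k] Tens k d NN :=
  LinearEquiv.ofInvolutive
    { toFun := fun v => Finsupp.equivFunOnFinite.symm fun w => columnSign pr col k w * v w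
      map_add' := fun v v' => Finsupp.ext fun w => mul_add _ (v w) (v' w)
      map_smul' := fun c v => Finsupp.ext fun w => mul_left_comm _ c (v w) }
    fun v => Finsupp.ext fun w => by
      change columnSign pr col k w * (columnSign pr col k w * v w) = v w
      rw [← mul_assoc, columnSign_mul_self, one_mul]

lemma columnTwist_apply (v : Tens k d NN) (w : Word d NN) :
    columnTwist pr col k v w = columnSign pr col k w * v w := rfl

lemma map_columnTwist_wtSpan (μ : Fin NN → ℕ) :
    (WtSpan k d NN μ).map (columnTwist pr col k : Tens k d NN →ₗ[k] Tens k d NN) =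
      WtSpan k d NN μ := by
  ext v
  rw [Submodule.mem_map_equiv, mem_wtSpan, mem_wtSpan]
  refine forall_congr' fun w => imp_congr_left (not_congr ?_)
  exact mul_eq_zero_iff_left (left_ne_zero_of_mul_eq_one (columnSign_mul_self w))

lemma columnTwist_fiberRep (τ : fiberPerms col) (v : Tens k d NN) :
    columnTwist pr col k (fiberRep 1 pr col k τ v) =
      fiberRep 1 pr col k τ (columnTwist pr col k v) := by
  have col_inv : col ∘ (τ.1⁻¹ : Equiv.Perm (Fin d)) = col := funext (inv_mem τ.2)
  ext w
  change columnSign pr col k w * twistedRep 1 pr τ.1 v w = twistedRep 1 pr τ.1 _ w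
  rw [twistedRep_apply_apply, twistedRep_apply_apply, columnTwist_apply, columnSign_comp, col_inv,
    mul_left_comm]

lemma map_columnTwist_coinvariantsKer :
    (Representation.Coinvariants.ker (fiberRep 1 pr col k)).map
        (columnTwist pr col k : Tens k d NN →ₗ[k] Tens k d NN) =
      Representation.Coinvariants.ker (fiberRep 1 pr col k) :=
  map_coinvariantsKer_of_intertwining (Equiv.refl _) _ columnTwist_fiberRep

lemma IsRowReading.val_add_col_eq (S : IsRowReading row col) {r r' : Fin d}
    (h : row r = row r') : (r : ℕ) + col r' = r' + col r := by
  wlog hle : r ≤ r' generalizing r r'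
  · exact (this h.symm (le_of_not_ge hle)).symm
  have row_eq {x : Fin d} (hx : x ∈ Ico r r') : row x = row r' :=
    le_antisymm (S.row_mono (mem_Ico.1 hx).2.le) (h ▸ S.row_mono (mem_Ico.1 hx).1)
  have col_mono {x y : Fin d} (hrow : row x = row y) (hxy : x ≤ y) : col x ≤ col y :=
    hxy.eq_or_lt.elim (fun hxy => hxy ▸ le_rfl) fun hxy => (S.col_lt hrow hxy).le
  have image_col : (Ico r r').image col = Ico (col r) (col r') := by
    ext j
    rw [mem_image, mem_Ico]
    constructor
    · rintro ⟨x, hx, rfl⟩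
      exact ⟨col_mono (h.trans (row_eq hx).symm) (mem_Ico.1 hx).1,
        S.col_lt (row_eq hx) (mem_Ico.1 hx).2⟩
    · rintro ⟨hj, hj'⟩
      obtain ⟨x, hrow, rfl⟩ := S.exists_cell le_rfl hj'.le
      refine ⟨x, mem_Ico.2 ⟨?_, S.lt_of_col_lt hrow hj'⟩, rfl⟩
      exact le_of_not_gt fun hx => hj.not_gt (S.col_lt (hrow.trans h.symm) hx)
  have card_eq := congrArg card image_col
  rw [card_image_of_injOn fun x hx y hy => S.inj ((row_eq hx).trans (row_eq hy).symm),
    Fin.card_Ico, Nat.card_Ico] at card_eq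
  have := col_mono h hle
  lia

lemma IsRowReading.twistedSign_add_one (S : IsRowReading row col) {σ : Equiv.Perm (Fin d)}
    (hσ : σ ∈ fiberPerms row) (w : Word d NN) :
    twistedSign 1 (fun j => pr j + 1) k σ w = twistedSign Equiv.Perm.sign pr k σ w *
      (columnSign pr col k w * columnSign pr col k (w ∘ σ)) := by
  have neg_one_pow_eq (r : Fin d) : (-1 : k) ^ ((r : ℕ) + (σ⁻¹ r : Fin d)) =
      (-1) ^ (col r + col (σ⁻¹ r)) := by
    have hr := S.val_add_col_eq (inv_mem hσ r)
    exact neg_one_pow_congr (by simp only [Nat.even_iff]; lia)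
  rw [twistedSign, twistedSign, MonoidHom.one_apply, Units.val_one, Int.cast_one, one_mul,
    columnSign_comp, columnSign, columnSign, ← prod_mul_distrib]
  refine (sgnF_add_one (pr ∘ w) σ).trans (congrArg _ (prod_congr rfl fun r _ => ?_))
  rw [← pow_add, ← mul_add, pow_mul', pow_mul', neg_one_pow_eq]
  rfl

lemma columnTwist_mem_invariants_iff (S : IsRowReading row col) :
    columnTwist pr col k v ∈ (fiberRep Equiv.Perm.sign pr row k).invariants ↔
      v ∈ (fiberRep 1 (fun j => pr j + 1) row k).invariants := by
  refine forall_congr' fun σ => ?_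
  refine twistedRep_fixed_iff.trans (Iff.trans (forall_congr' fun w => ?_)
    twistedRep_fixed_iff.symm)
  have h := columnSign_mul_self (k := k) (pr := pr) (col := col) (w ∘ σ.1)
  change columnSign pr col k (w ∘ σ.1) * v (w ∘ σ.1) =
      twistedSign _ pr k σ.1 w * (columnSign pr col k w * v w) ↔
    v (w ∘ σ.1) = twistedSign 1 _ k σ.1 w * v w
  rw [S.twistedSign_add_one σ.2]
  constructor <;> intro h'
  · linear_combination columnSign pr col k (w ∘ σ.1) * h' - v (w ∘ σ.1) * h
  · linear_combination columnSign pr col k (w ∘ σ.1) * h' +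
      (twistedSign Equiv.Perm.sign pr k σ.1 w * columnSign pr col k w * v w) * h

end ColumnTwist

section Cells

variable {q : ℕ} {lam mu : ℕ → ℕ}

lemma mem_cellsF {c : ℕ × ℕ} : c ∈ cellsF q lam mu ↔ c.1 < q ∧ mu c.1 ≤ c.2 ∧ c.2 < lam c.1 := by
  rw [cellsF, mem_filter, mem_product, mem_range, mem_range]
  exact ⟨fun h => ⟨h.1.1, h.2⟩,
    fun h => ⟨⟨h.1, h.2.2.trans_le (le_sup (f := lam) (mem_range.2 h.1))⟩, h.2⟩⟩

lemma exists_cellOf_eq {c : ℕ × ℕ} (hc : c ∈ cellsF q lam mu) : ∃ r, cellOf q lam mu r = c := by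
  refine ⟨(oR q lam mu).symm ⟨toLex c, mem_map_of_mem _ hc⟩, ?_⟩
  rw [cellOf, OrderIso.apply_symm_apply, ofLex_toLex]

lemma cellOf_injective : Function.Injective (cellOf q lam mu) :=
  ofLex.injective.comp (Subtype.val_injective.comp (oR q lam mu).injective)

lemma row_col_lt_of_lt {r r' : Fin (dOf q lam mu)} (h : r < r') :
    rowOf q lam mu r < rowOf q lam mu r' ∨
      rowOf q lam mu r = rowOf q lam mu r' ∧ colOf q lam mu r < colOf q lam mu r' :=
  Prod.Lex.lt_iff.1 (Subtype.coe_lt_coe.2 ((oR q lam mu).lt_iff_lt.2 h))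

lemma isRowReading_rowOf_colOf (hlam : Antitone lam) :
    IsRowReading (rowOf q lam fun _ => 0) (colOf q lam fun _ => 0) where
  row_mono r r' h := by
    rcases h.eq_or_lt with rfl | h
    · rfl
    · exact (row_col_lt_of_lt h).elim le_of_lt fun h => h.1.le
  col_lt hrow h := (row_col_lt_of_lt h).elim (fun h => absurd hrow h.ne) And.right
  exists_cell {r i j} hi hj := by
    obtain ⟨hrow, -, hcol⟩ := mem_cellsF.1 (cellOf_mem q lam (fun _ => 0) r)
    obtain ⟨r', hr'⟩ := exists_cellOf_eq (q := q) (lam := lam) (mu := fun _ => 0) (c := (i, j))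
      (mem_cellsF.2 ⟨hi.trans_lt hrow, Nat.zero_le _, hj.trans_lt (hcol.trans_le (hlam hi))⟩)
    exact ⟨r', congrArg Prod.fst hr', congrArg Prod.snd hr'⟩

lemma cellOf_sigmaRC (s : Fin (dOf q lam mu)) :
    cellOf q lam mu (sigmaRC q lam mu s) = cellC q lam mu s := by
  rw [cellOf, sigmaRC, Equiv.ofBijective_apply, OrderIso.apply_symm_apply, ofLex_toLex]

end Cells

section SchurSupermodule

variable {k : Type} [Field k] {q : ℕ} {lam mu : ℕ → ℕ} {d NN : ℕ} {par : Fin NN → ZMod 2}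

lemma fiberRep_one_apply {ι : Type*} {κ : Fin d → ι} (σ : fiberPerms κ) (v : Tens k d NN) :
    fiberRep 1 par κ k σ v = act k par σ.1⁻¹ v := by
  simp [fiberRep, twistedRep]

lemma gammaPi_eq_invariants :
    GammaPi k q lam mu par = (fiberRep 1 (fun j => par j + 1) (rowOf q lam mu) k).invariants := by
  ext v
  simp only [GammaPi, Submodule.mem_iInf, LinearMap.mem_eqLocus, LinearMap.id_apply,
    Representation.mem_invariants, fiberRep_one_apply]
  exact ⟨fun h σ => h _ (inv_mem σ.2), fun h σ hσ => inv_inv σ ▸ h ⟨σ⁻¹, inv_mem hσ⟩⟩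

variable (k par) in
/-- The signed place permutation by `σ`, as a linear automorphism of the tensor power. -/
noncomputable def actEquiv (σ : Equiv.Perm (Fin d)) : Tens k d NN ≃ₗ[k] Tens k d NN :=
  LinearEquiv.ofLinearMap (act k par σ) (act k par σ⁻¹)
    (by rw [← act_mul, inv_mul_cancel, act_one]) (by rw [← act_mul, mul_inv_cancel, act_one])

lemma map_actEquiv_wtSpan (σ : Equiv.Perm (Fin d)) (μ : Fin NN → ℕ) :
    (WtSpan k d NN μ).map (actEquiv k par σ : Tens k d NN →ₗ[k] Tens k d NN) =
      WtSpan k d NN μ := by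
  ext v
  rw [Submodule.mem_map_equiv, mem_wtSpan, mem_wtSpan]
  refine ((σ.arrowCongr (Equiv.refl (Fin NN))).forall_congr fun {w} => ?_).symm
  change _ ↔ act k par σ⁻¹ v (w ∘ (σ⁻¹ : Equiv.Perm (Fin d))) ≠ 0 →
    wtW (w ∘ (σ⁻¹ : Equiv.Perm (Fin d))) = μ
  rw [act_apply_comp, wtW_comp]
  exact imp_congr_left (not_congr
    (mul_eq_zero_iff_left (left_ne_zero_of_mul_eq_one (sgnF_mul_self _ _))).symm)

lemma urel_eq_coinvariantsKer :
    Urel k q lam mu par = Representation.Coinvariants.ker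
      (fiberRep 1 par (fun s => (cellC q lam mu s).2) k) := by
  rw [Urel]
  refine le_antisymm (iSup₂_le fun τ hτ => ?_) (Submodule.span_le.2 ?_)
  · rintro _ ⟨v, rfl⟩
    exact Representation.Coinvariants.mem_ker_of_eq ⟨τ⁻¹, inv_mem hτ⟩ v _
      (by rw [fiberRep_one_apply, inv_inv]; rfl)
  · rintro _ ⟨⟨τ, v⟩, rfl⟩
    exact Submodule.mem_iSup_of_mem _ (Submodule.mem_iSup_of_mem (inv_mem τ.2)
      ⟨v, congrArg (· - v) (fiberRep_one_apply τ v).symm⟩)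

variable (q lam mu) in
/-- Conjugation by `sigmaRC` identifies the two column groups, for the row-reading and for the
column-reading enumeration of the cells. -/
noncomputable def columnGroupEquiv :
    fiberPerms (colOf q lam mu) ≃ fiberPerms fun s => (cellC q lam mu s).2 :=
  (MulAut.conj (sigmaRC q lam mu)⁻¹).toEquiv.subtypeEquiv fun τ => by
    refine ((sigmaRC q lam mu).forall_congr fun {s} => ?_).symm
    simp only [← cellOf_sigmaRC]
    simp [colOf]

lemma map_actEquiv_coinvariantsKer :
    (Representation.Coinvariants.ker (fiberRep 1 par (colOf q lam mu) k)).map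
        (actEquiv k par (sigmaRC q lam mu) : Tens k _ NN →ₗ[k] Tens k _ NN) =
      Urel k q lam mu par := by
  rw [urel_eq_coinvariantsKer]
  refine map_coinvariantsKer_of_intertwining (columnGroupEquiv q lam mu) _ fun τ v => ?_
  rw [fiberRep_one_apply, fiberRep_one_apply]
  change (act k par _ ∘ₗ act k par _) v = (act k par _ ∘ₗ act k par _) v
  rw [← act_mul, ← act_mul]
  congr 2
  simp [columnGroupEquiv, mul_assoc]

variable (k q lam par) in
/-- The automorphism of the tensor power carrying the row anti-invariants to `GammaPi`, followed
by the place permutation in the definition of the Schur map. -/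
noncomputable def schurTwist :
    Tens k (dOf q lam fun _ => 0) NN ≃ₗ[k] Tens k (dOf q lam fun _ => 0) NN :=
  (columnTwist par (colOf q lam fun _ => 0) k).trans
    (actEquiv k par (sigmaRC q lam fun _ => 0))

lemma map_schurTwist_coinvariantsKer :
    (Representation.Coinvariants.ker (fiberRep 1 par (colOf q lam fun _ => 0) k)).map
        (schurTwist k q lam par : Tens k _ NN →ₗ[k] Tens k _ NN) =
      Urel k q lam (fun _ => 0) par := by
  rw [schurTwist, LinearEquiv.coe_trans, Submodule.map_comp, map_columnTwist_coinvariantsKer,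
    map_actEquiv_coinvariantsKer]

lemma map_schurTwist_wtSpan (μ : Fin NN → ℕ) :
    (WtSpan k (dOf q lam fun _ => 0) NN μ).map
        (schurTwist k q lam par : Tens k _ NN →ₗ[k] Tens k _ NN) =
      WtSpan k (dOf q lam fun _ => 0) NN μ := by
  rw [schurTwist, LinearEquiv.coe_trans, Submodule.map_comp, map_columnTwist_wtSpan,
    map_actEquiv_wtSpan]

lemma map_columnTwist_invariants (S : IsRowReading (rowOf q lam fun _ => 0)
    (colOf q lam fun _ => 0)) :
    (fiberRep Equiv.Perm.sign par (rowOf q lam fun _ => 0) k).invariants.map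
        (columnTwist par (colOf q lam fun _ => 0) k : Tens k _ NN →ₗ[k] Tens k _ NN) =
      GammaPi k q lam (fun _ => 0) par := by
  ext v
  rw [Submodule.mem_map_equiv, gammaPi_eq_invariants]
  exact columnTwist_mem_invariants_iff S

lemma sHat_eq (S : IsRowReading (rowOf q lam fun _ => 0) (colOf q lam fun _ => 0)) :
    SHat k q lam (fun _ => 0) par =
      ((fiberRep Equiv.Perm.sign par (rowOf q lam fun _ => 0) k).invariants.map
        (schurTwist k q lam par : Tens k _ NN →ₗ[k] Tens k _ NN)).map
          (Urel k q lam (fun _ => 0) par).mkQ := by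
  rw [SHat, theta, ← map_columnTwist_invariants S, schurTwist, LinearEquiv.coe_trans,
    Submodule.map_comp, Submodule.map_comp]
  rfl

lemma finrank_sHatWt (h2 : (2 : k) ≠ 0)
    (S : IsRowReading (rowOf q lam fun _ => 0) (colOf q lam fun _ => 0)) (μ : Fin NN → ℕ) :
    Module.finrank k ↥(SHatWt k q lam (fun _ => 0) par μ) =
      #{t | IsCostandard par (rowOf q lam fun _ => 0) (colOf q lam fun _ => 0) t ∧ wtW t = μ} := by
  let e := Submodule.Quotient.equiv _ _ (schurTwist k q lam par) map_schurTwist_coinvariantsKer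
  have map_mkQ (N : Submodule k (Tens k (dOf q lam fun _ => 0) NN)) :
      (N.map (schurTwist k q lam par : Tens k _ NN →ₗ[k] Tens k _ NN)).map
          (Urel k q lam (fun _ => 0) par).mkQ =
        (N.map (Representation.Coinvariants.ker
          (fiberRep 1 par (colOf q lam fun _ => 0) k)).mkQ).map (e : _ →ₗ[k] _) := by
    rw [← Submodule.map_comp, ← Submodule.map_comp]
    rfl
  have wtSpan_eq := map_mkQ (WtSpan k (dOf q lam fun _ => 0) NN μ)
  rw [map_schurTwist_wtSpan] at wtSpan_eq
  rw [← finrank_map_mkQ_invariants_inf S h2, SHatWt, sHat_eq S, wtSpan_eq, map_mkQ,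
    ← Submodule.map_inf _ e.injective, LinearEquiv.finrank_map_eq]

lemma prod_X_eq_monomial (t : Word d NN) :
    ∏ r, (MvPolynomial.X (t r) : MvPolynomial (Fin NN) ℤ) =
      MvPolynomial.monomial (Finsupp.equivFunOnFinite.symm (wtW t)) 1 := by
  refine (MvPolynomial.monomial_sum_one _ _).symm.trans (congrArg (MvPolynomial.monomial · 1) ?_)
  ext a
  simp [wtW, Finsupp.single_apply]

lemma chSHat_eq_sum (h2 : (2 : k) ≠ 0) (hlam : Antitone lam) :
    chSHat k q lam (fun _ => 0) par =
      ∑ t : Word (dOf q lam fun _ => 0) NN with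
        IsCostandard par (rowOf q lam fun _ => 0) (colOf q lam fun _ => 0) t,
          ∏ r, (MvPolynomial.X (t r) : MvPolynomial (Fin NN) ℤ) := by
  rw [chSHat, ← sum_fiberwise_of_maps_to (g := wtW) (t := univ.image fun w => wtW w)
    fun t _ => mem_image_of_mem _ (mem_univ t)]
  refine sum_congr rfl fun μ _ => ?_
  rw [finrank_sHatWt h2 (isRowReading_rowOf_colOf hlam), filter_filter,
    sum_congr rfl fun t ht => (prod_X_eq_monomial t).trans (by rw [(mem_filter.1 ht).2.2]),
    sum_const, nsmul_eq_mul]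
  rfl

end SchurSupermodule

lemma isCostandard_iff_adjacent {d NN : ℕ} {row col : Fin d → ℕ} {pr : Fin NN → ZMod 2}
    {w : Word d NN} (S : IsRowReading row col) :
    IsCostandard pr row col w ↔
      (∀ r r', row r = row r' → col r' = col r + 1 → w r ≤ w r' ∧ (w r = w r' → pr (w r) = 1)) ∧
      (∀ r r', col r = col r' → row r' = row r + 1 → w r ≤ w r' ∧ (w r = w r' → pr (w r) = 0)) :=
  and_congr
    ⟨fun h r r' hrow hcol => h r r' hrow (by lia), .of_adjacent fun hj => S.exists_cell le_rfl hj⟩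
    ⟨fun h r r' hcol hrow => h r r' hcol (by lia),
      .of_adjacent fun hi => (S.exists_cell hi le_rfl).imp fun _ => And.symm⟩

section Conjugate

lemma lt_card_filter_range_iff {P : ℕ → Prop} [DecidablePred P] (hP : Antitone P) {i N : ℕ} :
    i < #{j ∈ range N | P j} ↔ i < N ∧ P i := by
  constructor
  · contrapose!
    intro h
    refine (card_le_card fun j hj => ?_).trans (card_range i).le
    obtain ⟨hjN, hj⟩ := mem_filter.1 hj
    refine mem_range.2 (lt_of_not_ge fun hij => ?_)
    exact h (hij.trans_lt (mem_range.1 hjN)) (hP hij hj)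
  · rintro ⟨hiN, hi⟩
    refine (card_range (i + 1)).ge.trans (card_le_card fun j hj => ?_)
    have hji : j ≤ i := Nat.lt_succ_iff.1 (mem_range.1 hj)
    exact mem_filter.2 ⟨mem_range.2 (hji.trans_lt hiN), hP hji hi⟩

variable {q : ℕ} {lam : ℕ → ℕ}

lemma lt_conjOf (hlam : Antitone lam) {i j : ℕ} : i < conjOf q lam j ↔ i < q ∧ j < lam i :=
  lt_card_filter_range_iff (P := fun i => j < lam i) fun _ _ h hj => hj.trans_le (hlam h)

lemma conjOf_antitone : Antitone (conjOf q lam) :=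
  fun _ _ h => card_le_card (monotone_filter_right _ fun _ _ => h.trans_lt)

lemma swap_mem_cellsF_conjOf (hlam : Antitone lam) {c : ℕ × ℕ} :
    c.swap ∈ cellsF (lam 0) (conjOf q lam) (fun _ => 0) ↔ c ∈ cellsF q lam fun _ => 0 := by
  rw [mem_cellsF, mem_cellsF, Prod.fst_swap, Prod.snd_swap, lt_conjOf hlam]
  have := hlam c.1.zero_le
  lia

/-- The identification of the positions of `λ'` with the cells of `λ`, by transposition. -/
noncomputable def conjCellEquiv (hlam : Antitone lam) :
    Fin (dOf (lam 0) (conjOf q lam) fun _ => 0) ≃ ↥(cellsF q lam fun _ => 0) :=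
  Equiv.ofBijective
    (fun r => ⟨(cellOf _ _ _ r).swap, (swap_mem_cellsF_conjOf hlam).1 (cellOf_mem _ _ _ r)⟩)
    ⟨fun _ _ h => cellOf_injective (Prod.swap_injective (congrArg Subtype.val h)),
      fun c => (exists_cellOf_eq ((swap_mem_cellsF_conjOf hlam).2 c.2)).imp fun _ hr =>
        Subtype.ext (congrArg Prod.swap hr)⟩

end Conjugate

section HookTableaux

/-- Fillings of the cells of the partition `λ` with letters from `Fin NN`. -/
abbrev Filling (q : ℕ) (lam : ℕ → ℕ) (NN : ℕ) := ↥(cellsF q lam fun _ => 0) → Fin NN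

/-- Hook tableaux, described by adjacent cells: both rows and columns weakly increase, rows repeat
only the even letters, which are those below `m`, and columns repeat only the odd ones. -/
structure IsHookTableau {q : ℕ} {lam : ℕ → ℕ} {NN : ℕ} (m : ℕ) (T : Filling q lam NN) : Prop where
  row_adj : ∀ c c', c.1.1 = c'.1.1 → c'.1.2 = c.1.2 + 1 → T c ≤ T c' ∧ (T c = T c' → (T c : ℕ) < m)
  col_adj : ∀ c c', c.1.2 = c'.1.2 → c'.1.1 = c.1.1 + 1 → T c ≤ T c' ∧ (T c = T c' → m ≤ (T c : ℕ))

variable {q m NN : ℕ} {lam : ℕ → ℕ}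

lemma isCostandard_comp_conjCellEquiv_iff (hlam : Antitone lam) {T : Filling q lam NN} :
    IsCostandard (fun j => if (j : ℕ) < m then (0 : ZMod 2) else 1)
        (rowOf (lam 0) (conjOf q lam) fun _ => 0) (colOf (lam 0) (conjOf q lam) fun _ => 0)
        (T ∘ conjCellEquiv hlam) ↔ IsHookTableau m T := by
  have odd_iff (a : Fin NN) : (if (a : ℕ) < m then (0 : ZMod 2) else 1) = 1 ↔ m ≤ (a : ℕ) := by
    split_ifs with h <;> simp [h, le_of_not_gt]
  have even_iff (a : Fin NN) : (if (a : ℕ) < m then (0 : ZMod 2) else 1) = 0 ↔ (a : ℕ) < m := by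
    split_ifs with h <;> simp [h]
  rw [isCostandard_iff_adjacent (isRowReading_rowOf_colOf conjOf_antitone), and_comm]
  simp only [odd_iff, even_iff]
  refine Iff.trans (and_congr ?_ ?_) ⟨fun h => ⟨h.1, h.2⟩, fun h => ⟨h.1, h.2⟩⟩ <;>
    exact (conjCellEquiv hlam).forall_congr fun {_} =>
      (conjCellEquiv hlam).forall_congr fun {_} => Iff.rfl

lemma sum_isCostandard_eq_sum_isHookTableau (hlam : Antitone lam) :
    (∑ t : Word (dOf (lam 0) (conjOf q lam) fun _ => 0) NN with
        IsCostandard (fun j => if (j : ℕ) < m then (0 : ZMod 2) else 1)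
          (rowOf (lam 0) (conjOf q lam) fun _ => 0) (colOf (lam 0) (conjOf q lam) fun _ => 0) t,
        ∏ r, (MvPolynomial.X (t r) : MvPolynomial (Fin NN) ℤ)) =
      ∑ T : Filling q lam NN with IsHookTableau m T, ∏ c, MvPolynomial.X (T c) := by
  refine (sum_equiv ((conjCellEquiv hlam).symm.arrowCongr (Equiv.refl _)) (fun T => ?_)
    fun T _ => ?_).symm
  · rw [mem_filter, mem_filter, and_iff_right (mem_univ _), and_iff_right (mem_univ _)]
    exact (isCostandard_comp_conjCellEquiv_iff hlam).symm
  · exact ((conjCellEquiv hlam).prod_comp fun c => MvPolynomial.X (T c)).symm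

end HookTableaux

section EvenShape

variable {q m NN : ℕ} {lam : ℕ → ℕ} {T : Filling q lam NN} {f : (i : Fin q) → Fin (lam i + 1)}

/-- The cell `(i, j)` exists and carries an even letter, that is, one below `m`. -/
def IsEvenCell (m : ℕ) (T : Filling q lam NN) (i j : ℕ) : Prop :=
  ∃ h : (i, j) ∈ cellsF q lam fun _ => 0, (T ⟨(i, j), h⟩ : ℕ) < m

lemma IsHookTableau.isEvenCell_antitone (hT : IsHookTableau m T) (i : ℕ) :
    Antitone (IsEvenCell m T i) := by
  refine antitone_nat_of_succ_le fun j => ?_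
  rintro ⟨h, heven⟩
  have h' : (i, j) ∈ cellsF q lam fun _ => 0 := by
    simp only [mem_cellsF] at h ⊢
    lia
  exact ⟨h', (Fin.le_def.1 (hT.row_adj ⟨_, h'⟩ ⟨_, h⟩ rfl rfl).1).trans_lt heven⟩

lemma IsHookTableau.isEvenCell_of_succ (hT : IsHookTableau m T) (hlam : Antitone lam) {i j : ℕ}
    (hij : IsEvenCell m T (i + 1) j) : IsEvenCell m T i j := by
  obtain ⟨h, heven⟩ := hij
  have h' : (i, j) ∈ cellsF q lam fun _ => 0 := by
    have := hlam i.le_succ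
    simp only [mem_cellsF] at h ⊢
    lia
  exact ⟨h', (Fin.le_def.1 (hT.col_adj ⟨_, h'⟩ ⟨_, h⟩ rfl rfl).1).trans_lt heven⟩

/-- The lengths of the even parts of the rows: the partition `μ` at which a hook tableau is cut. -/
noncomputable def evenShape (m : ℕ) (T : Filling q lam NN) (i : Fin q) : Fin (lam i + 1) :=
  ⟨#{j ∈ range (lam i) | IsEvenCell m T i j},
    Nat.lt_succ_of_le ((card_filter_le _ _).trans (card_range _).le)⟩

lemma IsHookTableau.lt_evenShape_iff (hT : IsHookTableau m T) {i : Fin q} {j : ℕ} :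
    j < (evenShape m T i : ℕ) ↔ IsEvenCell m T i j :=
  (lt_card_filter_range_iff (hT.isEvenCell_antitone i)).trans
    (and_iff_right_of_imp fun h => (mem_cellsF.1 h.1).2.2)

lemma IsHookTableau.evenShape_antitone (hT : IsHookTableau m T) (hlam : Antitone lam)
    {i j : Fin q} (hij : i ≤ j) : (evenShape m T j : ℕ) ≤ evenShape m T i := by
  refine le_of_forall_lt fun x hx => hT.lt_evenShape_iff.2 ?_
  have antitone_row : Antitone fun i => IsEvenCell m T i x :=
    antitone_nat_of_succ_le fun _ => hT.isEvenCell_of_succ hlam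
  exact antitone_row hij (hT.lt_evenShape_iff.1 hx)

lemma muOf_apply (i : Fin q) : muOf q lam f i = f i := dif_pos i.2

lemma muOf_le (i : ℕ) : muOf q lam f i ≤ lam i := by
  by_cases h : i < q
  · exact (muOf_apply ⟨i, h⟩).trans_le (Nat.lt_succ_iff.1 (f ⟨i, h⟩).2)
  · exact (dif_neg h).trans_le (Nat.zero_le _)

lemma muOf_antitone (hf : ∀ i j : Fin q, i ≤ j → (f j : ℕ) ≤ (f i : ℕ)) :
    Antitone (muOf q lam f) := by
  intro i j hij
  by_cases hj : j < q
  · exact (muOf_apply ⟨j, hj⟩).trans_le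
      ((hf ⟨i, hij.trans_lt hj⟩ ⟨j, hj⟩ hij).trans_eq (muOf_apply _).symm)
  · exact (dif_neg hj).trans_le (Nat.zero_le _)

lemma IsHookTableau.evenShape_eq_iff (hT : IsHookTableau m T) :
    evenShape m T = f ↔ ∀ c, (T c : ℕ) < m ↔ c.1.2 < muOf q lam f c.1.1 := by
  constructor
  · rintro rfl ⟨⟨i, j⟩, hc⟩
    rw [muOf_apply ⟨i, (mem_cellsF.1 hc).1⟩, hT.lt_evenShape_iff]
    exact ⟨fun h => ⟨hc, h⟩, fun h => h.2⟩
  · intro h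
    refine funext fun i => Fin.ext (eq_of_forall_lt_iff fun j => ?_)
    rw [hT.lt_evenShape_iff, ← muOf_apply (f := f)]
    refine ⟨fun ⟨hc, heven⟩ => (h _).1 heven, fun hj => ?_⟩
    have hc : ((i : ℕ), j) ∈ cellsF q lam fun _ => 0 :=
      mem_cellsF.2 ⟨i.2, Nat.zero_le _, hj.trans_le (muOf_le _)⟩
    exact ⟨hc, (h ⟨_, hc⟩).2 hj⟩

end EvenShape

section Glue

variable {q m n : ℕ} {lam : ℕ → ℕ} (f : (i : Fin q) → Fin (lam i + 1))

variable {f} in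
lemma mem_cellsF_muOf {c : ℕ × ℕ} : c ∈ cellsF q (muOf q lam f) (fun _ => 0) ↔
    c ∈ cellsF q lam (fun _ => 0) ∧ c.2 < muOf q lam f c.1 := by
  have := muOf_le (f := f) c.1
  simp only [mem_cellsF]
  lia

variable {f} in
lemma mem_conjSkewCells {c : ℕ × ℕ} : c ∈ conjSkewCells q lam (muOf q lam f) ↔
    c.swap ∈ cellsF q lam (fun _ => 0) ∧ ¬ c.1 < muOf q lam f c.2 := by
  rw [conjSkewCells, ← Equiv.coe_prodComm, ← Equiv.coe_toEmbedding, ← map_eq_image, mem_map_equiv,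
    mem_sdiff, mem_cellsF_muOf]
  exact and_congr_right fun h => not_congr (and_iff_right h)

/-- The cells of `λ` split into those of `μ` and the transposes of those of `λ'/μ'`. -/
noncomputable def glueCells :
    ↥(cellsF q (muOf q lam f) fun _ => 0) ⊕ ↥(conjSkewCells q lam (muOf q lam f)) ≃
      ↥(cellsF q lam fun _ => 0) :=
  Equiv.ofBijective
    (Sum.elim (fun c => ⟨c.1, (mem_cellsF_muOf.1 c.2).1⟩)
      fun c => ⟨c.1.swap, (mem_conjSkewCells.1 c.2).1⟩) <| by
    constructor
    · refine Function.Injective.sumElim (fun a b h => ?_) (fun a b h => ?_) fun a b h => ?_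
      · simpa only [Subtype.mk.injEq, Subtype.coe_inj] using h
      · exact Subtype.ext (Prod.swap_injective (congrArg Subtype.val h))
      · have hab : a.1 = b.1.swap := congrArg Subtype.val h
        have hlt := (mem_cellsF_muOf.1 a.2).2
        rw [hab] at hlt
        exact (mem_conjSkewCells.1 b.2).2 hlt
    · intro c
      by_cases h : c.1.2 < muOf q lam f c.1.1
      · exact ⟨Sum.inl ⟨c.1, mem_cellsF_muOf.2 ⟨c.2, h⟩⟩, rfl⟩
      · exact ⟨Sum.inr ⟨c.1.swap, mem_conjSkewCells.2 ⟨c.2, h⟩⟩, rfl⟩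

/-- The filling of `λ` that carries `T` on `μ` and the transpose of `U`, with its letters shifted
by `m`, on the rest. -/
noncomputable def glue (T : Filling q (muOf q lam f) m)
    (U : ↥(conjSkewCells q lam (muOf q lam f)) → Fin n) : Filling q lam (m + n) :=
  Sum.elim (Fin.castAdd n ∘ T) (Fin.natAdd m ∘ U) ∘ (glueCells f).symm

variable {f} {T : Filling q (muOf q lam f) m} {U : ↥(conjSkewCells q lam (muOf q lam f)) → Fin n}

lemma glue_inl (c) : glue f T U (glueCells f (Sum.inl c)) = Fin.castAdd n (T c) :=
  congrArg (Sum.elim _ _) ((glueCells f).symm_apply_apply _)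

lemma glue_inr (c) : glue f T U (glueCells f (Sum.inr c)) = Fin.natAdd m (U c) :=
  congrArg (Sum.elim _ _) ((glueCells f).symm_apply_apply _)

lemma glue_injective :
    Function.Injective fun p : Filling q (muOf q lam f) m ×
      (↥(conjSkewCells q lam (muOf q lam f)) → Fin n) => glue f p.1 p.2 := by
  refine fun p p' h => Prod.ext (funext fun c => ?_) (funext fun c => ?_)
  · have := congrFun h (glueCells f (Sum.inl c))
    exact Fin.castAdd_injective _ _ (by simpa only [glue_inl] using this)
  · have := congrFun h (glueCells f (Sum.inr c))
    exact Fin.natAdd_injective _ _ (by simpa only [glue_inr] using this)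

lemma glue_lt_iff (c : ↥(cellsF q lam fun _ => 0)) :
    (glue f T U c : ℕ) < m ↔ c.1.2 < muOf q lam f c.1.1 := by
  obtain ⟨c | c, rfl⟩ := (glueCells f).surjective c
  · rw [glue_inl]
    exact iff_of_true (T c).2 (mem_cellsF_muOf.1 c.2).2
  · rw [glue_inr]
    exact iff_of_false (Nat.le_add_right _ _).not_gt (mem_conjSkewCells.1 c.2).2

lemma exists_glue_eq {V : Filling q lam (m + n)}
    (hV : ∀ c, (V c : ℕ) < m ↔ c.1.2 < muOf q lam f c.1.1) : ∃ T U, glue f T U = V := by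
  have even_lt (c) : (V (glueCells f (Sum.inl c)) : ℕ) < m :=
    (hV _).2 (mem_cellsF_muOf.1 c.2).2
  have odd_ge (c) : m ≤ (V (glueCells f (Sum.inr c)) : ℕ) :=
    le_of_not_gt fun h => (mem_conjSkewCells.1 c.2).2 ((hV _).1 h)
  refine ⟨fun c => (V (glueCells f (Sum.inl c))).castLT (even_lt c),
    fun c => ((V (glueCells f (Sum.inr c))).cast (add_comm m n)).subNat m (odd_ge c),
    funext fun c => ?_⟩
  obtain ⟨c | c, rfl⟩ := (glueCells f).surjective c
  · rw [glue_inl]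
    rfl
  · rw [glue_inr]
    exact Fin.natAdd_subNat_cast (odd_ge c)

lemma isHookTableau_glue (hf : ∀ i j : Fin q, i ≤ j → (f j : ℕ) ≤ (f i : ℕ))
    (hT : SSYTpred _ T) (hU : SSYTpred _ U) : IsHookTableau m (glue f T U) := by
  constructor
  · intro c c' hrow hcol
    obtain ⟨c | c, rfl⟩ := (glueCells f).surjective c <;>
      obtain ⟨c' | c', rfl⟩ := (glueCells f).surjective c' <;> simp only [glue_inl, glue_inr]
    · exact ⟨hT.1 c c' hrow hcol, fun _ => (T c).2⟩
    · exact ⟨Fin.le_def.2 ((T c).2.le.trans (Nat.le_add_right _ _)), fun _ => (T c).2⟩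
    · have heven := (mem_cellsF_muOf.1 c'.2).2
      have hodd := (mem_conjSkewCells.1 c.2).2
      change c.1.2 = c'.1.1 at hrow
      change c'.1.2 = c.1.1 + 1 at hcol
      rw [hrow] at hodd
      lia
    · have hlt := Fin.strictMono_natAdd m (hU.2 c c' hrow hcol)
      exact ⟨hlt.le, fun h => absurd h hlt.ne⟩
  · intro c c' hcol hrow
    obtain ⟨c | c, rfl⟩ := (glueCells f).surjective c <;>
      obtain ⟨c' | c', rfl⟩ := (glueCells f).surjective c' <;> simp only [glue_inl, glue_inr]
    · have hlt := Fin.strictMono_castAdd n (hT.2 c c' hcol hrow)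
      exact ⟨hlt.le, fun h => absurd h hlt.ne⟩
    · have hlt : Fin.castAdd n (T c) < Fin.natAdd m (U c') :=
        Fin.lt_def.2 ((T c).2.trans_le (Nat.le_add_right _ _))
      exact ⟨hlt.le, fun h => absurd h hlt.ne⟩
    · have heven := (mem_cellsF_muOf.1 c'.2).2
      have hodd := (mem_conjSkewCells.1 c.2).2
      change c.1.1 = c'.1.2 at hcol
      change c'.1.1 = c.1.2 + 1 at hrow
      have := muOf_antitone hf (show c.1.2 ≤ c'.1.1 by lia)
      lia
    · exact ⟨(Fin.natAdd_le_natAdd_iff m).2 (hU.1 c c' hcol hrow), fun _ => Nat.le_add_right _ _⟩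

lemma IsHookTableau.left_of_glue (h : IsHookTableau m (glue f T U)) : SSYTpred _ T := by
  constructor
  · intro c c' hrow hcol
    have := (h.row_adj (glueCells f (Sum.inl c)) (glueCells f (Sum.inl c')) hrow hcol).1
    rwa [glue_inl, glue_inl] at this
  · intro c c' hcol hrow
    obtain ⟨hle, heq⟩ := h.col_adj (glueCells f (Sum.inl c)) (glueCells f (Sum.inl c')) hcol hrow
    rw [glue_inl, glue_inl] at hle heq
    exact lt_of_le_of_ne hle fun hT => (heq (congrArg _ hT)).not_gt (T c).2

lemma IsHookTableau.right_of_glue (h : IsHookTableau m (glue f T U)) : SSYTpred _ U := by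
  constructor
  · intro c c' hcol hrow
    have := (h.col_adj (glueCells f (Sum.inr c)) (glueCells f (Sum.inr c')) hcol hrow).1
    rwa [glue_inr, glue_inr, Fin.natAdd_le_natAdd_iff] at this
  · intro c c' hrow hcol
    obtain ⟨hle, heq⟩ := h.row_adj (glueCells f (Sum.inr c)) (glueCells f (Sum.inr c')) hrow hcol
    rw [glue_inr, glue_inr] at hle heq
    rw [Fin.natAdd_le_natAdd_iff] at hle
    exact lt_of_le_of_ne hle fun hU => (heq (congrArg _ hU)).not_ge (Nat.le_add_right _ _)

lemma prod_X_glue : ∏ c, (MvPolynomial.X (glue f T U c) : MvPolynomial (Fin (m + n)) ℤ) =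
    (∏ c, MvPolynomial.X (Fin.castAdd n (T c))) * ∏ c, MvPolynomial.X (Fin.natAdd m (U c)) := by
  rw [← (glueCells f).prod_comp, Fintype.prod_sum_type]
  simp only [glue_inl, glue_inr]

lemma tabPoly_mul_tabPoly_eq_sum (hf : ∀ i j : Fin q, i ≤ j → (f j : ℕ) ≤ (f i : ℕ)) :
    tabPoly (cellsF q (muOf q lam f) fun _ => 0) (Fin.castAdd n) *
        tabPoly (conjSkewCells q lam (muOf q lam f)) (Fin.natAdd m) =
      ∑ V : Filling q lam (m + n) with IsHookTableau m V ∧ evenShape m V = f,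
        ∏ c, MvPolynomial.X (V c) := by
  rw [tabPoly, tabPoly, sum_mul_sum, ← sum_product']
  refine sum_nbij (fun p => glue f p.1 p.2) (fun p hp => ?_) glue_injective.injOn (fun V hV => ?_)
    fun p _ => prod_X_glue.symm
  · obtain ⟨hT, hU⟩ := mem_product.1 hp
    have h := isHookTableau_glue hf (mem_filter.1 hT).2 (mem_filter.1 hU).2
    exact mem_filter.2 ⟨mem_univ _, h, h.evenShape_eq_iff.2 glue_lt_iff⟩
  · obtain ⟨-, hhook, hshape⟩ := mem_filter.1 hV
    obtain ⟨T, U, rfl⟩ := exists_glue_eq (hhook.evenShape_eq_iff.1 hshape)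
    exact ⟨(T, U), mem_product.2 ⟨mem_filter.2 ⟨mem_univ _, hhook.left_of_glue⟩,
      mem_filter.2 ⟨mem_univ _, hhook.right_of_glue⟩⟩, rfl⟩

lemma sum_isHookTableau_eq_hookSchur (hlam : Antitone lam) :
    ∑ V : Filling q lam (m + n) with IsHookTableau m V,
      ∏ c, (MvPolynomial.X (V c) : MvPolynomial (Fin (m + n)) ℤ) = hookSchur q m n lam := by
  have maps_to (V : Filling q lam (m + n)) (hV : V ∈ univ.filter (IsHookTableau m)) :
      evenShape m V ∈ univ.filter fun f : (i : Fin q) → Fin (lam i + 1) =>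
        ∀ i j : Fin q, i ≤ j → (f j : ℕ) ≤ (f i : ℕ) :=
    mem_filter.2 ⟨mem_univ _, fun _ _ => (mem_filter.1 hV).2.evenShape_antitone hlam⟩
  rw [hookSchur, ← sum_fiberwise_of_maps_to maps_to]
  refine sum_congr rfl fun f hf => ?_
  rw [filter_filter, tabPoly_mul_tabPoly_eq_sum (mem_filter.1 hf).2]

end Glue

/-- The formal character of the Schur supermodule `Ŝ_λ(k^{m|n})`
equals the hook Schur function `hs_λ(x₁,…,x_m; y₁,…,y_n)`.  Here `Ŝ_λ(k^{m|n})` is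
realized, via the standard basis theorem, as the Schur supermodule attached to the
conjugate shape `λ'` in the word model, with the alphabet `[m+n]` graded so that the
first `m` letters are even and the last `n` are odd. -/
theorem character_eq_hookSchur
    (k : Type) [Field k] (h2 : (2 : k) ≠ 0)
    (m n q : ℕ) (lam : ℕ → ℕ)
    (hlam : ∀ i, lam (i + 1) ≤ lam i) (hsupp : ∀ i, q ≤ i → lam i = 0) :
    chSHat k (lam 0) (conjOf q lam) (fun _ => 0)
        (fun j : Fin (m + n) => if (j : ℕ) < m then (0 : ZMod 2) else 1)
      = hookSchur q m n lam := by
  have antitone_lam : Antitone lam := antitone_nat_of_succ_le hlam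
  rw [chSHat_eq_sum h2 conjOf_antitone, sum_isCostandard_eq_sum_isHookTableau antitone_lam,
    sum_isHookTableau_eq_hookSchur antitone_lam]

end SuperSchur
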